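/- Let 1 ≤ p, q, r, s ≤ ∞. Suppose there exists a constant C > 0 such that ‖L_σ f‖_{M^{r,s}} ≤ C · ‖σ‖_{M^{p,q}} · ‖f‖_{M^{r,s}} for all Schwartz σ on ℝ^{2d} and all Schwartz f on ℝ^d. Then there exists a constant C' > 0 such that ‖L_σ f‖_{M^{r',s'}} ≤ C' · ‖σ‖_{M^{p,q}} · ‖f‖_{M^{r',s'}} for all Schwartz σ on ℝ^{2d} and all Schwartz f on ℝ^d, where r', s' are the conjugate exponents of r, s (this holds also when r = ∞ or s = ∞). -/

import Mathlib

open MeasureTheory SchwartzMap Complex ENNReal NNReal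

noncomputable section

/-- Mixed `L^p`-type norm of an `ℝ≥0∞`-valued function, with the usual
`essSup` modification when `p = ∞`. -/
def lqNorm {α : Type*} [MeasurableSpace α] (μ : Measure α) (p : ℝ≥0∞)
    (f : α → ℝ≥0∞) : ℝ≥0∞ :=
  if p = ∞ then essSup f μ else (∫⁻ a, f a ^ p.toReal ∂μ) ^ (1 / p.toReal)

/-- Conjugate exponent in `ℝ≥0∞` : `1/p + 1/p' = 1`, with `1' = ∞`, `∞' = 1`. -/
def dualExp (p : ℝ≥0∞) : ℝ≥0∞ :=
  if p = 1 then ∞ else if p = ∞ then 1 else ENNReal.ofReal (p.toReal / (p.toReal - 1))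

/-- `1/p` as a real number, with the convention `1/∞ = 0`. -/
def invR (p : ℝ≥0∞) : ℝ := (p⁻¹).toReal

/-- The Gaussian window `G(t) = exp(-π |t|²)` (as a complex-valued function). -/
def gaussWin {ι : Type*} [Fintype ι] (t : EuclideanSpace ℝ ι) : ℂ :=
  Complex.exp (-(Real.pi * ‖t‖ ^ 2))

/-- Short-time Fourier transform with Gaussian window:
`V_G F (x, ω) = ∫ F t * conj (G (t - x)) * exp (-2πi ω⬝t) dt`. -/
def STFT {ι : Type*} [Fintype ι] (F : EuclideanSpace ℝ ι → ℂ)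
    (x ω : EuclideanSpace ℝ ι) : ℂ :=
  ∫ t, F t * (starRingEnd ℂ) (gaussWin (t - x)) *
    Complex.exp (Complex.I * (-(2 * Real.pi * (inner ℝ ω t : ℝ))))

/-- Modulation space norm `M^{p,q}`. -/
def modNorm {ι : Type*} [Fintype ι] (p q : ℝ≥0∞)
    (F : EuclideanSpace ℝ ι → ℂ) : ℝ≥0∞ :=
  lqNorm volume q fun ω => lqNorm volume p fun x => (‖STFT F x ω‖₊ : ℝ≥0∞)

/-- Wiener amalgam norm `W(𝓕 L^p, L^q)` (local component Fourier–Lebesgue). -/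
def wFLNorm {ι : Type*} [Fintype ι] (p q : ℝ≥0∞)
    (F : EuclideanSpace ℝ ι → ℂ) : ℝ≥0∞ :=
  lqNorm volume q fun x => lqNorm volume p fun ω => (‖STFT F x ω‖₊ : ℝ≥0∞)

/-- The unit cube `[0,1)^d`. -/
def unitCube (d : ℕ) : Set (EuclideanSpace ℝ (Fin d)) :=
  {x | ∀ i, x i ∈ Set.Ico (0 : ℝ) 1}

/-- Wiener amalgam norm
`‖f‖_{W(L^r,L^s)} = ( Σ_{n ∈ ℤ^d} ( ∫_{[0,1)^d} |f(x+n)|^r dx )^{s/r} )^{1/s}`. -/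
def wNorm (d : ℕ) (r s : ℝ≥0∞) (f : EuclideanSpace ℝ (Fin d) → ℂ) : ℝ≥0∞ :=
  lqNorm (Measure.count : Measure (Fin d → ℤ)) s fun n =>
    lqNorm (volume.restrict (unitCube d)) r fun x =>
      (‖f (x + show EuclideanSpace ℝ (Fin d) from WithLp.toLp 2 fun i => (n i : ℝ))‖₊ : ℝ≥0∞)

/-- Pairing `(x, ω) ∈ ℝ^d × ℝ^d ↦ ℝ^{2d}`. -/
def pairE {d : ℕ} (x ω : EuclideanSpace ℝ (Fin d)) :
    EuclideanSpace ℝ (Fin d ⊕ Fin d) :=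
  WithLp.toLp 2 fun i => Sum.elim (fun j => x j) (fun j => ω j) i

/-- First (space) component of a point of `ℝ^{2d}`. -/
def xpart {d : ℕ} (z : EuclideanSpace ℝ (Fin d ⊕ Fin d)) :
    EuclideanSpace ℝ (Fin d) := WithLp.toLp 2 fun i => z (Sum.inl i)

/-- Second (frequency) component of a point of `ℝ^{2d}`. -/
def wpart {d : ℕ} (z : EuclideanSpace ℝ (Fin d ⊕ Fin d)) :
    EuclideanSpace ℝ (Fin d) := WithLp.toLp 2 fun i => z (Sum.inr i)

/-- Fourier transform `f̂(ω) = ∫ f t e^{-2πi t⬝ω} dt`. -/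
def fTrans {ι : Type*} [Fintype ι] (f : EuclideanSpace ℝ ι → ℂ)
    (ω : EuclideanSpace ℝ ι) : ℂ :=
  ∫ t, f t * Complex.exp (Complex.I * (-(2 * Real.pi * (inner ℝ t ω : ℝ))))

/-- Kohn–Nirenberg operator `a(x,D) f (x) = ∫ a(x,ω) f̂(ω) e^{2πi x⬝ω} dω`. -/
def KNop {d : ℕ} (a : EuclideanSpace ℝ (Fin d ⊕ Fin d) → ℂ)
    (f : EuclideanSpace ℝ (Fin d) → ℂ) (x : EuclideanSpace ℝ (Fin d)) : ℂ :=
  ∫ ω, a (pairE x ω) * fTrans f ω *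
    Complex.exp (Complex.I * (2 * Real.pi * (inner ℝ x ω : ℝ)))

/-- Weyl operator `L_σ f (x) = ∫∫ e^{2πi (x-y)⬝ω} σ((x+y)/2, ω) f(y) dy dω`. -/
def weylOp {d : ℕ} (σ : EuclideanSpace ℝ (Fin d ⊕ Fin d) → ℂ)
    (f : EuclideanSpace ℝ (Fin d) → ℂ) (x : EuclideanSpace ℝ (Fin d)) : ℂ :=
  ∫ y, ∫ ω, Complex.exp (Complex.I * (2 * Real.pi * (inner ℝ (x - y) ω : ℝ))) *
    σ (pairE ((2 : ℝ)⁻¹ • (x + y)) ω) * f y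

/-- Cross-Wigner distribution
`W(g,f)(x,ω) = ∫ g(x+t/2) conj(f(x−t/2)) e^{−2πi ω⬝t} dt`. -/
def wigner {d : ℕ} (g f : EuclideanSpace ℝ (Fin d) → ℂ)
    (z : EuclideanSpace ℝ (Fin d ⊕ Fin d)) : ℂ :=
  ∫ t, g (xpart z + (2 : ℝ)⁻¹ • t) * (starRingEnd ℂ) (f (xpart z - (2 : ℝ)⁻¹ • t)) *
    Complex.exp (Complex.I * (-(2 * Real.pi * (inner ℝ (wpart z) t : ℝ))))

end

theorem htg_fderiv {V F : Type} [NormedAddCommGroup V] [NormedSpace ℝ V]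
    [NormedAddCommGroup F] [NormedSpace ℝ F] {P : V → F} (hP : P.HasTemperateGrowth) :
    (fderiv ℝ P).HasTemperateGrowth := by
  refine ⟨hP.1.fderiv_right (by simp), fun n => ?_⟩
  obtain ⟨k, C, h⟩ := hP.2 (n+1)
  refine ⟨k, C, fun x => ?_⟩
  rw [norm_iteratedFDeriv_fderiv]
  exact h x

theorem expQ_fderiv {V F : Type} [NormedAddCommGroup V] [NormedSpace ℝ V]
    [NormedAddCommGroup F] [NormedSpace ℂ F] {Q : V → ℂ} (hQ : Q.HasTemperateGrowth)
    {P : V → F} (hP : P.HasTemperateGrowth) :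
    fderiv ℝ (fun v => cexp (Q v) • P v) =
      fun v => cexp (Q v) • (fderiv ℝ P v +
        ContinuousLinearMap.compL ℝ V ℂ F ((ContinuousLinearMap.lsmul ℝ ℂ).flip (P v))
          (fderiv ℝ Q v)) := by
  ext v w
  have h1 : HasFDerivAt Q (fderiv ℝ Q v) v :=
    (hQ.1.differentiable (by simp) v).hasFDerivAt
  have h2 : HasFDerivAt P (fderiv ℝ P v) v :=
    (hP.1.differentiable (by simp) v).hasFDerivAt
  rw [(h1.cexp.fun_smul h2).fderiv]
  simp [mul_smul]

theorem expQ_decay (V : Type) [NormedAddCommGroup V] [NormedSpace ℝ V]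
    {Q : V → ℂ} (hQ : Q.HasTemperateGrowth) {c C : ℝ} (hc : 0 < c)
    (hre : ∀ v, (Q v).re ≤ C - c * ‖v‖ ^ 2) (k n : ℕ) :
    ∀ (F : Type) [NormedAddCommGroup F] [NormedSpace ℂ F] (P : V → F) 
      (_ : P.HasTemperateGrowth),
      ∃ K, ∀ v, ‖v‖ ^ k * ‖iteratedFDeriv ℝ n (fun v => cexp (Q v) • P v) v‖ ≤ K := by
  induction n with
  | zero =>
    intro F _ _ P hP
    obtain ⟨m, A, h⟩ := hP.2 0
    have hA : 0 ≤ A := by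
      have := h 0
      simp at this
      exact (norm_nonneg _).trans this
    -- (1+x)^(k+m) exp(-c x^2) bounded
    have hlim : Filter.Tendsto (fun x : ℝ => (1 + x) ^ (k + m) * Real.exp (-c * x)) 
        Filter.atTop (nhds 0) := by
      have h1 := (Real.tendsto_pow_mul_exp_neg_atTop_nhds_zero (k+m)).comp
        (Filter.tendsto_id.const_mul_atTop hc |>.comp 
          (Filter.tendsto_atTop_add_const_left _ (1:ℝ) Filter.tendsto_id))
      have h2 := h1.const_mul ((c ^ (k+m))⁻¹ * Real.exp c)
      simp only [mul_zero] at h2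
      refine h2.congr fun x => ?_
      simp only [Function.comp, id]
      rw [mul_pow, show -(c * (1 + x)) = -c + -c * x by ring, Real.exp_add, Real.exp_neg c]
      field_simp
    have hb : ∃ K, ∀ x : ℝ, 0 ≤ x → (1 + x) ^ (k + m) * Real.exp (-c * x) ≤ K := by
      obtain ⟨N, hN⟩ := (hlim.eventually (gt_mem_nhds (show (0:ℝ) < 1 by norm_num))).exists_forall_of_atTop
      have hcont : Continuous (fun x : ℝ => (1 + x) ^ (k + m) * Real.exp (-c * x)) := by fun_prop
      obtain ⟨K, hK⟩ := (isCompact_Icc (a := (0:ℝ)) (b := N)).bddAbove_image hcont.continuousOn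
      refine ⟨max K 1, fun x hx => ?_⟩
      rcases le_total N x with h | h
      · exact (hN x h).le.trans (le_max_right _ _)
      · exact (hK ⟨x, ⟨hx, h⟩, rfl⟩).trans (le_max_left _ _)
    obtain ⟨K, hK⟩ := hb
    refine ⟨A * Real.exp (C + c) * K, fun v => ?_⟩
    rw [norm_iteratedFDeriv_zero, norm_smul, Complex.norm_exp]
    have e1 : ‖P v‖ ≤ A * (1 + ‖v‖) ^ m := by simpa using h v
    have e2 : ‖v‖ ^ k ≤ (1 + ‖v‖) ^ k := by gcongr; linarith
    have e3 : Real.exp (Q v).re ≤ Real.exp (C + c) * Real.exp (-c * ‖v‖) := by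
      rw [← Real.exp_add]
      apply Real.exp_le_exp.2
      have := hre v
      nlinarith [mul_nonneg hc.le (sq_nonneg (‖v‖ - 1)), norm_nonneg v]
    calc _ ≤ (1 + ‖v‖) ^ k * ((Real.exp (C + c) * Real.exp (-c * ‖v‖)) * (A * (1 + ‖v‖) ^ m)) := by
          gcongr
      _ = A * Real.exp (C+c) * ((1 + ‖v‖) ^ (k+m) * Real.exp (-c * ‖v‖)) := by ring
      _ ≤ _ := by 
          gcongr
          exact hK _ (norm_nonneg _)
  | succ n ih =>
    intro F _ _ P hP
    simp_rw [← norm_iteratedFDeriv_fderiv, expQ_fderiv hQ hP]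
    refine ih (V →L[ℝ] F) _ ?_
    refine (htg_fderiv hP).add ?_
    refine ContinuousLinearMap.bilinear_hasTemperateGrowth (𝕜 := ℝ) 
      ((ContinuousLinearMap.compL ℝ V ℂ F).comp (ContinuousLinearMap.lsmul ℝ ℂ).flip) hP (htg_fderiv hQ)

theorem expQ_schwartz {V : Type} [NormedAddCommGroup V] [NormedSpace ℝ V]
    {Q : V → ℂ} (hQ : Q.HasTemperateGrowth) {c C : ℝ} (hc : 0 < c)
    (hre : ∀ v, (Q v).re ≤ C - c * ‖v‖ ^ 2) :
    ∃ S : 𝓢(V, ℂ), ∀ v, S v = cexp (Q v) := by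
  refine ⟨⟨fun v => cexp (Q v), ?_, fun k n => ?_⟩, fun v => rfl⟩
  · exact hQ.1.cexp
  · obtain ⟨K, hK⟩ := expQ_decay V hQ hc hre k n ℂ (fun _ => 1) (.const 1)
    exact ⟨K, by simpa using hK⟩

theorem int_fderiv {Z E F : Type} [NormedAddCommGroup Z] [NormedSpace ℝ Z] [MeasurableSpace Z]
    [BorelSpace Z] [SecondCountableTopology Z]
    [NormedAddCommGroup E] [NormedSpace ℝ E] 
    [NormedAddCommGroup F] [NormedSpace ℂ F] [CompleteSpace F]
    (μ : Measure Z) (Ψ : Z → ℂ) (hΨ : Integrable Ψ μ) (S : 𝓢(Z × E, F)) (t : E) :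
    HasFDerivAt (fun t => ∫ z, Ψ z • S (z, t) ∂μ) 
      (∫ z, Ψ z • (S.fderivCLM ℝ (Z × E) F |>.postcompCLM 
        ((ContinuousLinearMap.compL ℝ E (Z × E) F).flip (ContinuousLinearMap.inr ℝ Z E))) (z, t) ∂μ) t := by
  obtain ⟨K, hK⟩ : ∃ K, ∀ v, ‖(S.fderivCLM ℝ (Z × E) F |>.postcompCLM 
        ((ContinuousLinearMap.compL ℝ E (Z × E) F).flip (ContinuousLinearMap.inr ℝ Z E))) v‖ ≤ K :=
    ⟨_, fun v => SchwartzMap.norm_le_seminorm ℝ _ v⟩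
  have hcont : ∀ {F' : Type} [NormedAddCommGroup F'] [NormedSpace ℂ F'] (S : 𝓢(Z × E, F')) (t : E),
      AEStronglyMeasurable (fun z => Ψ z • S (z, t)) μ := fun S t =>
    hΨ.aestronglyMeasurable.smul 
      (Continuous.aestronglyMeasurable (S.continuous.comp (by fun_prop)))
  refine hasFDerivAt_integral_of_dominated_of_fderiv_le (𝕜 := ℝ) (μ := μ) (x₀ := t) (F := fun t z => Ψ z • S (z, t)) 
    (F' := fun t z => Ψ z • (S.fderivCLM ℝ (Z × E) F |>.postcompCLM 
        ((ContinuousLinearMap.compL ℝ E (Z × E) F).flip (ContinuousLinearMap.inr ℝ Z E))) (z, t)) (s := Set.univ) 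
    (bound := fun z => ‖Ψ z‖ * K)
    Filter.univ_mem ?_ ?_ ?_ ?_ ?_ ?_ 
  · exact .of_forall fun t => hcont _ _
  · obtain ⟨K', hK'⟩ : ∃ K', ∀ v, ‖S v‖ ≤ K' := ⟨_, fun v => SchwartzMap.norm_le_seminorm ℝ _ v⟩
    refine (hΨ.norm.mul_const K').mono' (hcont _ _) (.of_forall fun z => ?_)
    rw [norm_smul]
    gcongr
    exact hK' _
  · exact hcont _ _
  · refine .of_forall fun z t _ => ?_
    rw [norm_smul]
    gcongr
    exact hK _
  · exact hΨ.norm.mul_const K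
  · refine .of_forall fun z t _ => ?_
    have := (S.hasFDerivAt (z, t)).comp t (hasFDerivAt_prodMk_right (𝕜 := ℝ) z t)
    exact this.const_smul (Ψ z)

theorem int_schwartz_aux {Z E : Type} [NormedAddCommGroup Z] [NormedSpace ℝ Z] [MeasurableSpace Z]
    [BorelSpace Z] [SecondCountableTopology Z]
    [NormedAddCommGroup E] [NormedSpace ℝ E] 
    (μ : Measure Z) (Ψ : Z → ℂ) (hΨ : Integrable Ψ μ) (k n : ℕ) :
    ∀ (F : Type) [NormedAddCommGroup F] [NormedSpace ℂ F] [CompleteSpace F] (S : 𝓢(Z × E, F)),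
    ContDiff ℝ n (fun t => ∫ z, Ψ z • S (z, t) ∂μ) ∧ 
    ∃ K, ∀ t, ‖t‖ ^ k * ‖iteratedFDeriv ℝ n (fun t => ∫ z, Ψ z • S (z, t) ∂μ) t‖ ≤ K := by
  induction n with
  | zero =>
    intro F _ _ _ S
    refine ⟨contDiff_zero.2 ?_, ?_⟩
    · exact continuous_iff_continuousAt.2 fun t => (int_fderiv μ Ψ hΨ S t).continuousAt
    · obtain ⟨K, hK⟩ := S.decay k 0
      refine ⟨(∫ z, ‖Ψ z‖ ∂μ) * K, fun t => ?_⟩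
      rw [norm_iteratedFDeriv_zero]
      calc _ ≤ ‖t‖ ^ k * ∫ z, ‖Ψ z • S (z, t)‖ ∂μ := by
            gcongr; exact norm_integral_le_integral_norm _
        _ = ∫ z, ‖t‖ ^ k * ‖Ψ z • S (z, t)‖ ∂μ := by rw [integral_const_mul]
        _ ≤ ∫ z, ‖Ψ z‖ * K ∂μ := by
            refine integral_mono_of_nonneg (.of_forall fun z => by positivity) 
              (hΨ.norm.mul_const K) (.of_forall fun z => ?_)
            have := hK.2 (z, t)
            rw [norm_iteratedFDeriv_zero] at this
            have h2 : ‖t‖ ≤ ‖(z, t)‖ := le_max_right _ _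
            simp only [norm_smul]
            calc _ = ‖Ψ z‖ * (‖t‖ ^ k * ‖S (z,t)‖) := by ring
              _ ≤ ‖Ψ z‖ * (‖(z,t)‖ ^ k * ‖S (z,t)‖) := by gcongr
              _ ≤ _ := by gcongr
        _ = _ := by rw [integral_mul_const]
  | succ n ih =>
    intro F _ _ _ S
    obtain ⟨h1, h2⟩ := ih (E →L[ℝ] F) (S.fderivCLM ℝ (Z × E) F |>.postcompCLM 
        ((ContinuousLinearMap.compL ℝ E (Z × E) F).flip (ContinuousLinearMap.inr ℝ Z E)))
    have hd : fderiv ℝ (fun t => ∫ z, Ψ z • S (z, t) ∂μ) = _ := 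
      funext fun t => (int_fderiv μ Ψ hΨ S t).fderiv
    constructor
    · push_cast
      rw [contDiff_succ_iff_fderiv]
      refine ⟨fun t => (int_fderiv μ Ψ hΨ S t).differentiableAt, by simp, ?_⟩
      rw [hd]; exact h1
    · simp_rw [← norm_iteratedFDeriv_fderiv, hd]
      exact h2

theorem int_schwartz {Z E : Type} [NormedAddCommGroup Z] [NormedSpace ℝ Z] [MeasurableSpace Z]
    [BorelSpace Z] [SecondCountableTopology Z]
    [NormedAddCommGroup E] [NormedSpace ℝ E] 
    (μ : Measure Z) (Ψ : Z → ℂ) (hΨ : Integrable Ψ μ) (S : 𝓢(Z × E, ℂ)) :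
    ∃ g : 𝓢(E, ℂ), ∀ t, g t = ∫ z, Ψ z • S (z, t) ∂μ :=
  ⟨⟨fun t => ∫ z, Ψ z • S (z, t) ∂μ, 
    contDiff_infty.2 fun n => (int_schwartz_aux μ Ψ hΨ 0 n ℂ S).1,
    fun k n => (int_schwartz_aux μ Ψ hΨ k n ℂ S).2⟩, fun _ => rfl⟩

section PartA

variable {α β : Type*} [MeasurableSpace α] [MeasurableSpace β]

theorem lq_top (μ : Measure α) (f : α → ℝ≥0∞) : lqNorm μ ∞ f = essSup f μ := by simp [lqNorm]

theorem lq_one (μ : Measure α) (f : α → ℝ≥0∞) : lqNorm μ 1 f = ∫⁻ a, f a ∂μ := by simp [lqNorm]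

theorem lq_fin (μ : Measure α) {p : ℝ≥0∞} (hp : p ≠ ∞) (f : α → ℝ≥0∞) :
    lqNorm μ p f = (∫⁻ a, f a ^ p.toReal ∂μ) ^ (1 / p.toReal) := by simp [lqNorm, hp]

theorem lq_fin_le {μ : Measure α} {p : ℝ≥0∞} (hp1 : 1 ≤ p) (hp : p ≠ ∞) {f : α → ℝ≥0∞} {A : ℝ≥0∞} :
    lqNorm μ p f ≤ A ↔ ∫⁻ a, f a ^ p.toReal ∂μ ≤ A ^ p.toReal := by
  have : 0 < p.toReal := ENNReal.toReal_pos (by positivity) hp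
  rw [lq_fin μ hp, one_div, ENNReal.rpow_inv_le_iff this]

theorem lq_mono (μ : Measure α) (p : ℝ≥0∞) {f g : α → ℝ≥0∞} (h : ∀ a, f a ≤ g a) :
    lqNorm μ p f ≤ lqNorm μ p g := by
  unfold lqNorm
  split_ifs
  · exact essSup_mono_ae (.of_forall h)
  · gcongr
    exact h _

theorem dual_cases {p : ℝ≥0∞} (hp : 1 ≤ p) : (p = 1 ∧ dualExp p = ∞) ∨ (p = ∞ ∧ dualExp p = 1) ∨
    (p ≠ ∞ ∧ dualExp p ≠ ∞ ∧ 1 < p ∧ 1 < dualExp p ∧ p.toReal.HolderConjugate (dualExp p).toReal) := by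
  by_cases h1 : p = 1
  · left; simp [dualExp, h1]
  by_cases h2 : p = ∞
  · right; left; simp [dualExp, h2]
  right; right
  have h3 : 1 < p := lt_of_le_of_ne hp (Ne.symm h1)
  have h4 : 1 < p.toReal := by
    have := (ENNReal.toReal_lt_toReal ENNReal.one_ne_top h2).2 h3
    simpa using this
  have h5 : dualExp p = ENNReal.ofReal (p.toReal / (p.toReal - 1)) := by simp [dualExp, h1, h2]
  have h6 : 1 < p.toReal / (p.toReal - 1) := by
    rw [lt_div_iff₀ (by linarith)]; linarith
  refine ⟨h2, by rw [h5]; exact ENNReal.ofReal_ne_top, h3, ?_, ?_⟩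
  · rw [h5, ← ENNReal.ofReal_one, ENNReal.ofReal_lt_ofReal_iff (by linarith)]; exact h6
  · rw [h5, ENNReal.toReal_ofReal (by linarith)]
    exact Real.HolderConjugate.conjExponent h4

theorem one_le_dual {p : ℝ≥0∞} (hp : 1 ≤ p) : 1 ≤ dualExp p := by
  rcases dual_cases hp with h | h | h
  · simp [h.2]
  · simp [h.2]
  · exact h.2.2.2.1.le

theorem dual_dual {p : ℝ≥0∞} (hp : 1 ≤ p) : dualExp (dualExp p) = p := by
  rcases dual_cases hp with h | h | ⟨h1, h2, h3, h4, h5⟩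
  · rw [h.2, h.1]; simp [dualExp]
  · rw [h.2, h.1]; simp [dualExp]
  · rcases dual_cases h4.le with h | h | h
    · exact absurd h.1 h4.ne'
    · exact absurd h.1 h2
    · refine (ENNReal.toReal_eq_toReal_iff' h.2.1 h1).1 ?_
      have e1 := h.2.2.2.2.inv_add_inv_eq_one
      have e2 := h5.inv_add_inv_eq_one
      exact inv_injective (by linarith)

theorem lq_measurable (μ : Measure β) [SFinite μ] (p : ℝ≥0∞) {F : α → β → ℝ≥0∞}
    (hF : Measurable (Function.uncurry F)) : Measurable fun a => lqNorm μ p (F a) := by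
  by_cases hp : p = ∞
  · subst hp
    simp_rw [lq_top]
    refine measurable_of_Iic fun c => ?_
    have : (fun a => essSup (F a) μ) ⁻¹' Set.Iic c =
        (fun a => μ (Prod.mk a ⁻¹' {z : α × β | c < F z.1 z.2})) ⁻¹' {0} := by
      ext a
      simp only [Set.mem_preimage, Set.mem_Iic, Set.mem_singleton_iff, Set.preimage_ofPred_eq]
      have e : (∀ᵐ b ∂μ, F a b ≤ c) ↔ μ {b | c < F a b} = 0 := by
        simp [ae_iff]
      rw [← e]
      exact ⟨fun h => (ENNReal.ae_le_essSup (F a)).mono fun b hb => hb.trans h,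
        fun h => essSup_le_of_ae_le _ h⟩
    rw [this]
    exact (measurable_measure_prodMk_left (measurableSet_lt measurable_const hF)) (measurableSet_singleton 0)
  · simp_rw [lq_fin μ hp]
    exact (Measurable.lintegral_prod_right (hF.pow_const _)).pow_const _

theorem lq_holder (μ : Measure α) {p : ℝ≥0∞} (hp : 1 ≤ p) {f g : α → ℝ≥0∞} (hf : Measurable f)
    (hg : Measurable g) : ∫⁻ a, f a * g a ∂μ ≤ lqNorm μ (dualExp p) f * lqNorm μ p g := by
  have key : ∀ f g : α → ℝ≥0∞, Measurable g → ∫⁻ a, f a * g a ∂μ ≤ essSup f μ * ∫⁻ a, g a ∂μ := by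
    intro f g hg
    rw [← lintegral_const_mul _ hg]
    refine lintegral_mono_ae ((ENNReal.ae_le_essSup f).mono fun a ha => ?_)
    gcongr
  rcases dual_cases hp with h | h | ⟨h1, h2, h3, h4, h5⟩
  · rw [h.2, h.1, lq_top, lq_one]; exact key f g hg
  · rw [h.2, h.1, lq_top, lq_one, mul_comm]; simp_rw [mul_comm (f _)]; exact key g f hf
  · rw [lq_fin μ h1, lq_fin μ h2]
    exact ENNReal.lintegral_mul_le_Lp_mul_Lq μ h5.symm hf.aemeasurable hg.aemeasurable

theorem lq_const_mul_le (μ : Measure α) {p : ℝ≥0∞} (hp : 1 ≤ p) {f : α → ℝ≥0∞} (hf : Measurable f)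
    (c : ℝ≥0∞) (h1 : lqNorm μ p f ≤ 1) : lqNorm μ p (fun a => f a * c) ≤ c := by
  by_cases h : p = ∞
  · subst h
    rw [lq_top] at *
    refine essSup_le_of_ae_le _ ((ENNReal.ae_le_essSup f).mono fun a ha => ?_)
    calc f a * c ≤ 1 * c := by gcongr; exact ha.trans h1
      _ = c := one_mul c
  · rw [lq_fin_le hp h] at *
    simp_rw [ENNReal.mul_rpow_of_nonneg _ _ ENNReal.toReal_nonneg]
    rw [lintegral_mul_const _ (hf.pow_const _)]
    calc _ ≤ 1 ^ p.toReal * c ^ p.toReal := by gcongr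
      _ = _ := by simp

theorem lq_iSup_le (μ : Measure α) {p : ℝ≥0∞} (hp : 1 ≤ p) {F : ℕ → α → ℝ≥0∞}
    (hF : ∀ n, Measurable (F n)) (hm : Monotone F) :
    lqNorm μ p (fun a => ⨆ n, F n a) ≤ ⨆ n, lqNorm μ p (F n) := by
  by_cases h : p = ∞
  · subst h
    simp_rw [lq_top]
    refine essSup_le_of_ae_le _ ?_
    have : ∀ᵐ a ∂μ, ∀ n, F n a ≤ essSup (F n) μ := ae_all_iff.2 fun n => ENNReal.ae_le_essSup (F n)
    exact this.mono fun a ha => iSup_mono ha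
  · have hpos : 0 < p.toReal := ENNReal.toReal_pos (by positivity) h
    rw [lq_fin_le hp h]
    have e : ∀ a, (⨆ n, F n a) ^ p.toReal = ⨆ n, (F n a) ^ p.toReal := fun a =>
      (ENNReal.orderIsoRpow p.toReal hpos).map_iSup _
    simp_rw [e]
    rw [lintegral_iSup (fun n => (hF n).pow_const _) (fun m n hmn a => by
      dsimp; gcongr; exact hm hmn a)]
    refine iSup_le fun n => ?_
    rw [← lq_fin_le hp h]
    exact le_iSup (fun n => lqNorm μ p (F n)) n

theorem lq_bdd (μ : Measure α) {p : ℝ≥0∞} (hp : 1 ≤ p) {f : α → ℝ≥0∞} {B : Set α} 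
    (hB : MeasurableSet B) {N : ℝ≥0∞} (h1 : ∀ a, f a ≤ N) (h2 : ∀ a, a ∉ B → f a = 0) :
    lqNorm μ p f ≤ N * (1 + μ B) := by
  by_cases h : p = ∞
  · subst h
    rw [lq_top]
    refine essSup_le_of_ae_le _ (.of_forall fun a => (h1 a).trans ?_)
    exact le_mul_of_one_le_right' (by simp)
  · have hp1 : 1 ≤ p.toReal := by
      have := ENNReal.toReal_mono h hp
      simpa using this
    rw [lq_fin_le hp h]
    have : ∀ a, f a ^ p.toReal ≤ B.indicator (fun _ => N ^ p.toReal) a := by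
      intro a
      by_cases ha : a ∈ B
      · simp only [ha, Set.indicator_of_mem]; gcongr; exact h1 a
      · simp [ha, h2 a ha]; linarith
    refine (lintegral_mono this).trans ?_
    rw [lintegral_indicator_const hB, ENNReal.mul_rpow_of_nonneg _ _ (by linarith)]
    gcongr
    calc μ B ≤ (1 + μ B) ^ (1:ℝ) := by simp
      _ ≤ _ := ENNReal.rpow_le_rpow_of_exponent_le (by simp) hp1

theorem lq_extremal (μ : Measure β) [SFinite μ] {p : ℝ≥0∞} (hp : 1 ≤ p) {F : α → β → ℝ≥0∞}
    (hF : Measurable (Function.uncurry F)) {B : Set β} (hB : MeasurableSet B) (hBf : μ B ≠ ∞)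
    {N : ℝ≥0∞} (hN : N ≠ ∞) (h1 : ∀ a b, F a b ≤ N) (h2 : ∀ a b, b ∉ B → F a b = 0)
    {θ : ℝ≥0∞} (hθ : θ < 1) :
    ∃ u : α → β → ℝ≥0∞, Measurable (Function.uncurry u) ∧ ∀ a, lqNorm μ p (u a) ≤ 1 ∧
      θ * lqNorm μ (dualExp p) (F a) ≤ ∫⁻ b, F a b * u a b ∂μ := by
  have hfin : ∀ a, lqNorm μ (dualExp p) (F a) ≠ ∞ := fun a =>
    ne_top_of_le_ne_top (ENNReal.mul_ne_top hN (by simp [hBf])) 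
      (lq_bdd μ (one_le_dual hp) hB (h1 a) (h2 a))
  have hmeas := lq_measurable μ (dualExp p) hF
  have hFa : ∀ a, Measurable (F a) := fun a => hF.comp measurable_prodMk_left
  rcases dual_cases hp with h | h | ⟨g1, g2, g3, g4, g5⟩
  · rw [h.2]
    rw [h.1]
    have hmeas := lq_measurable μ ∞ hF
    have hfin : ∀ a, lqNorm μ ∞ (F a) ≠ ∞ := fun a => h.2 ▸ hfin a
    have hSm : MeasurableSet {z : α × β | θ * lqNorm μ ∞ (F z.1) < F z.1 z.2} :=
      measurableSet_lt (measurable_const.mul (hmeas.comp measurable_fst)) hF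
    set S := {z : α × β | θ * lqNorm μ ∞ (F z.1) < F z.1 z.2} with hS
    have hm := measurable_measure_prodMk_left (ν := μ) hSm
    have hSa : ∀ a, MeasurableSet (Prod.mk a ⁻¹' S) := fun a => measurable_prodMk_left hSm
    have hint : ∀ a, ∫⁻ b, (S.indicator (fun z => (μ (Prod.mk z.1 ⁻¹' S))⁻¹)) (a, b) ∂μ
        = μ (Prod.mk a ⁻¹' S) * (μ (Prod.mk a ⁻¹' S))⁻¹ := by
      intro a
      have : ∀ b, (S.indicator (fun z => (μ (Prod.mk z.1 ⁻¹' S))⁻¹)) (a, b) =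
        (Prod.mk a ⁻¹' S).indicator (fun _ => (μ (Prod.mk a ⁻¹' S))⁻¹) b := fun b => rfl
      simp_rw [this]
      rw [lintegral_indicator_const (hSa a), mul_comm]
    refine ⟨fun a b => (S.indicator (fun z => (μ (Prod.mk z.1 ⁻¹' S))⁻¹)) (a, b), ?_, fun a => ⟨?_, ?_⟩⟩
    · exact (hm.comp measurable_fst).inv.indicator hSm
    · rw [lq_one, hint]
      exact ENNReal.mul_inv_le_one _
    · by_cases h0 : lqNorm μ ∞ (F a) = 0
      · simp [h0]
      have hlt : θ * lqNorm μ ∞ (F a) < lqNorm μ ∞ (F a) := by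
        have := (ENNReal.mul_lt_mul_iff_left h0 (hfin a)).2 hθ
        simpa using this
      have hpos : μ (Prod.mk a ⁻¹' S) ≠ 0 := by
        intro h0
        rw [lq_top] at hlt
        refine absurd (essSup_le_of_ae_le (f := F a) (μ := μ) (θ * essSup (F a) μ) ?_) (not_le.2 hlt)
        have : ∀ᵐ b ∂μ, b ∉ Prod.mk a ⁻¹' S := measure_eq_zero_iff_ae_notMem.1 h0
        refine this.mono fun b hb => ?_
        simpa [hS, lq_top] using hb
      have hft : μ (Prod.mk a ⁻¹' S) ≠ ∞ := by
        refine ne_top_of_le_ne_top hBf (measure_mono fun b hb => ?_)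
        by_contra hb'
        have : θ * lqNorm μ ∞ (F a) < F a b := hb
        rw [h2 a b hb'] at this
        exact absurd this (by simp)
      calc θ * lqNorm μ ∞ (F a) = θ * lqNorm μ ∞ (F a) * 
            ∫⁻ b, (S.indicator (fun z => (μ (Prod.mk z.1 ⁻¹' S))⁻¹)) (a, b) ∂μ := by
            rw [hint, ENNReal.mul_inv_cancel hpos hft, mul_one]
        _ ≤ ∫⁻ b, θ * lqNorm μ ∞ (F a) * (S.indicator (fun z => (μ (Prod.mk z.1 ⁻¹' S))⁻¹)) (a, b) ∂μ :=
            lintegral_const_mul_le _ _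
        _ ≤ _ := by
            refine lintegral_mono fun b => ?_
            by_cases hb : (a, b) ∈ S
            · gcongr
              exact le_of_lt hb
            · simp [hb]
  · rw [h.2]
    rw [h.1]
    refine ⟨fun _ _ => 1, measurable_const, fun a => ⟨?_, ?_⟩⟩
    · rw [lq_top]
      exact essSup_le_of_ae_le _ (.of_forall fun _ => le_rfl)
    · simp only [mul_one, lq_one]
      exact mul_le_of_le_one_left' hθ.le
  · set q := dualExp p with hq
    have hq0 : 0 < q.toReal := g5.symm.pos
    have hp0 : 0 < p.toReal := g5.pos
    have hI : ∀ a, ∫⁻ b, F a b ^ q.toReal ∂μ ≠ ∞ := by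
      intro a h
      have := hfin a
      rw [lq_fin μ g2, h] at this
      exact this (ENNReal.top_rpow_of_pos (by positivity))
    have hIm : Measurable fun a => ∫⁻ b, F a b ^ q.toReal ∂μ := 
      Measurable.lintegral_prod_right (hF.pow_const _)
    refine ⟨fun a b => F a b ^ (q.toReal - 1) * ((∫⁻ b, F a b ^ q.toReal ∂μ) ^ (1/p.toReal))⁻¹, ?_, 
      fun a => ⟨?_, ?_⟩⟩
    · exact (hF.pow_const _).mul ((hIm.comp measurable_fst).pow_const _).inv
    · rw [lq_fin_le hp g1]
      simp_rw [ENNReal.mul_rpow_of_nonneg _ _ hp0.le, ← ENNReal.rpow_mul, ← ENNReal.inv_rpow]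
      rw [lintegral_mul_const _ ((hFa a).pow_const _), show (q.toReal - 1) * p.toReal = q.toReal from 
        g5.symm.sub_one_mul_conj, ← ENNReal.rpow_mul, one_div, inv_mul_cancel₀ hp0.ne', ENNReal.rpow_one,
        ENNReal.one_rpow]
      exact ENNReal.mul_inv_le_one _
    · rw [lq_fin μ g2]
      by_cases h0 : ∫⁻ b, F a b ^ q.toReal ∂μ = 0
      · rw [h0, ENNReal.zero_rpow_of_pos (by positivity)]; simp
      have e : ∀ b, F a b * (F a b ^ (q.toReal - 1) * ((∫⁻ b, F a b ^ q.toReal ∂μ) ^ (1/p.toReal))⁻¹) =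
          F a b ^ q.toReal * ((∫⁻ b, F a b ^ q.toReal ∂μ) ^ (1/p.toReal))⁻¹ := by
        intro b
        rw [← mul_assoc]
        congr 1
        by_cases hb : F a b = 0
        · rw [hb, ENNReal.zero_rpow_of_pos hq0]; simp
        · nth_rewrite 1 [← ENNReal.rpow_one (F a b)]
          rw [← ENNReal.rpow_add _ _ hb (ne_top_of_le_ne_top hN (h1 a b))]
          congr 1; ring
      simp_rw [e]
      rw [lintegral_mul_const _ ((hFa a).pow_const _), ← ENNReal.rpow_neg]
      nth_rewrite 2 [← ENNReal.rpow_one (∫⁻ b, F a b ^ q.toReal ∂μ)]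
      rw [← ENNReal.rpow_add _ _ h0 (hI a)]
      have : 1 + -(1 / p.toReal) = 1 / q.toReal := by
        have := g5.inv_add_inv_eq_one
        simp only [one_div]; linarith
      rw [this]
      exact mul_le_of_le_one_left' hθ.le

end PartA

section PartA2

set_option linter.unusedSectionVars false

/-- Mixed norm. -/
noncomputable def mixN {E : Type} [MeasureSpace E] (r s : ℝ≥0∞) (F : E → E → ℝ≥0∞) : ℝ≥0∞ :=
  lqNorm volume s fun ω => lqNorm volume r (F ω)

variable {E : Type} [NormedAddCommGroup E] [MeasureSpace E] [BorelSpace E]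
  [ProperSpace E] [SecondCountableTopology E] [IsFiniteMeasureOnCompacts (volume : Measure E)]

theorem mix_mono {r s : ℝ≥0∞} {F G : E → E → ℝ≥0∞} (h : ∀ ω x, F ω x ≤ G ω x) :
    mixN r s F ≤ mixN r s G :=
  lq_mono _ _ fun ω => lq_mono _ _ fun x => h ω x

theorem mix_holder {r s : ℝ≥0∞} (hr : 1 ≤ r) (hs : 1 ≤ s) {F G : E → E → ℝ≥0∞}
    (hF : Measurable (Function.uncurry F)) (hG : Measurable (Function.uncurry G)) :
    ∫⁻ ω, ∫⁻ x, F ω x * G ω x ≤ mixN (dualExp r) (dualExp s) F * mixN r s G := by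
  refine le_trans (lintegral_mono fun ω => ?_) 
    (lq_holder volume hs (lq_measurable volume (dualExp r) hF) (lq_measurable volume r hG))
  exact lq_holder volume hr (hF.comp measurable_prodMk_left) (hG.comp measurable_prodMk_left)

/-- Truncation. -/
noncomputable def trunc (n : ℕ) (F : E → E → ℝ≥0∞) : E → E → ℝ≥0∞ := fun ω x =>
  (Metric.closedBall (0 : E) n ×ˢ Metric.closedBall (0 : E) n).indicator
    (fun z => min (F z.1 z.2) n) (ω, x)

theorem trunc_meas (n : ℕ) {F : E → E → ℝ≥0∞} (hF : Measurable (Function.uncurry F)) :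
    Measurable (Function.uncurry (trunc n F)) :=
  (hF.min measurable_const).indicator (Metric.isClosed_closedBall.measurableSet.prod 
    Metric.isClosed_closedBall.measurableSet)

theorem trunc_le (n : ℕ) (F : E → E → ℝ≥0∞) (ω x : E) : trunc n F ω x ≤ F ω x := by
  unfold trunc
  exact (Set.indicator_le_self _ _ _).trans (min_le_left _ _)

theorem trunc_bdd (n : ℕ) (F : E → E → ℝ≥0∞) (ω x : E) : trunc n F ω x ≤ n := by
  unfold trunc
  exact (Set.indicator_le_self _ _ _).trans (min_le_right _ _)

theorem trunc_supp (n : ℕ) (F : E → E → ℝ≥0∞) (ω x : E) (h : trunc n F ω x ≠ 0) : 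
    ω ∈ Metric.closedBall (0 : E) n ∧ x ∈ Metric.closedBall (0 : E) n := by
  unfold trunc at h
  have h2 := Set.mem_of_indicator_ne_zero h
  exact ⟨h2.1, h2.2⟩

theorem trunc_mono (F : E → E → ℝ≥0∞) (ω x : E) : Monotone fun n => trunc n F ω x := by
  intro m n hmn
  have hmn' : (m : ℝ) ≤ n := by exact_mod_cast hmn
  have hmn'' : (m : ℝ≥0∞) ≤ n := by exact_mod_cast hmn
  simp only [trunc]
  refine (Set.indicator_le_indicator_of_subset (Set.prod_mono (Metric.closedBall_subset_closedBall hmn')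
    (Metric.closedBall_subset_closedBall hmn')) (fun _ => zero_le) _).trans ?_
  refine Set.indicator_le_indicator ?_
  gcongr

theorem trunc_iSup (F : E → E → ℝ≥0∞) (ω x : E) : ⨆ n, trunc n F ω x = F ω x := by
  refine le_antisymm (iSup_le fun n => trunc_le n F ω x) ?_
  obtain ⟨N, hN⟩ := exists_nat_ge (max ‖ω‖ ‖x‖)
  refine le_of_forall_lt fun c hc => ?_
  obtain ⟨M, hM⟩ := ENNReal.exists_nat_gt (ne_top_of_lt hc)
  refine lt_of_lt_of_le ?_ (le_iSup (fun n => trunc n F ω x) (max N M))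
  have hN' : max ‖ω‖ ‖x‖ ≤ ((max N M : ℕ) : ℝ) := hN.trans (by exact_mod_cast le_max_left _ _)
  have : (ω, x) ∈ (Metric.closedBall (0 : E) (max N M : ℕ) ×ˢ Metric.closedBall (0 : E) (max N M : ℕ)) := by
    constructor
    · simpa using (le_max_left _ _).trans hN'
    · simpa using (le_max_right _ _).trans hN'
  simp only [trunc, Set.indicator_of_mem this]
  refine lt_min hc (hM.trans_le ?_)
  exact_mod_cast le_max_right _ _

theorem mix_converse {r s : ℝ≥0∞} (hr : 1 ≤ r) (hs : 1 ≤ s) {F : E → E → ℝ≥0∞}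
    (hF : Measurable (Function.uncurry F)) (A : ℝ≥0∞)
    (h : ∀ v : E → E → ℝ≥0∞, Measurable (Function.uncurry v) → 
      ∀ n : ℕ, (∀ ω x, v ω x ≤ n) → (∀ ω x, v ω x ≠ 0 → ‖ω‖ ≤ n ∧ ‖x‖ ≤ n) →
      ∫⁻ ω, ∫⁻ x, F ω x * v ω x ≤ A * mixN r s v) :
    mixN (dualExp r) (dualExp s) F ≤ A := by
  -- extend to all measurable v
  have h' : ∀ v : E → E → ℝ≥0∞, Measurable (Function.uncurry v) → 
      ∫⁻ ω, ∫⁻ x, F ω x * v ω x ≤ A * mixN r s v := by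
    intro v hv
    have e : ∀ ω x, F ω x * v ω x = ⨆ n, F ω x * trunc n v ω x := by
      intro ω x
      rw [← ENNReal.mul_iSup, trunc_iSup]
    have hm : ∀ n, Measurable (Function.uncurry fun ω x => F ω x * trunc n v ω x) := fun n =>
      hF.mul (trunc_meas n hv)
    simp_rw [e]
    have e2 : ∀ ω, ∫⁻ x, ⨆ n, F ω x * trunc n v ω x = ⨆ n, ∫⁻ x, F ω x * trunc n v ω x := by
      intro ω
      refine lintegral_iSup (fun n => (hm n).comp measurable_prodMk_left) fun m n hmn x => ?_
      dsimp only
      gcongr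
      exact trunc_mono v ω x hmn
    simp_rw [e2]
    rw [lintegral_iSup (fun n => Measurable.lintegral_prod_right (hm n))]
    · refine iSup_le fun n => ?_
      refine (h _ (trunc_meas n hv) n (trunc_bdd n v) fun ω x hx => ?_).trans ?_
      · have := trunc_supp n v ω x hx
        simpa using this
      · gcongr
        exact mix_mono (trunc_le n v)
    · intro m n hmn ω
      dsimp only
      refine lintegral_mono fun x => ?_
      dsimp only
      gcongr
      exact trunc_mono v ω x hmn
  have hr' := one_le_dual hr
  have hs' := one_le_dual hs
  -- truncated F
  have ht : ∀ n : ℕ, mixN (dualExp r) (dualExp s) (trunc n F) ≤ A := by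
    intro n
    set B := Metric.closedBall (0 : E) n
    have hB : MeasurableSet B := Metric.isClosed_closedBall.measurableSet
    have hBf : volume B ≠ ∞ := (isCompact_closedBall (0:E) n).measure_lt_top.ne
    have hFn := trunc_meas n hF
    have hkey : ∀ θ : ℝ≥0∞, θ < 1 → θ * (θ * mixN (dualExp r) (dualExp s) (trunc n F)) ≤ A := by
      intro θ hθ
      obtain ⟨u, hu, hu'⟩ := lq_extremal volume hr hFn hB hBf (ENNReal.natCast_ne_top n) 
        (trunc_bdd n F) (fun ω x hx => by
          by_contra hne
          exact hx (trunc_supp n F ω x hne).2) hθ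
      set H : Unit → E → ℝ≥0∞ := fun _ ω => lqNorm volume (dualExp r) (trunc n F ω) with hH
      have hHm : Measurable (Function.uncurry H) := 
        (lq_measurable volume (dualExp r) hFn).comp measurable_snd
      have hM : (n : ℝ≥0∞) * (1 + volume B) ≠ ∞ := 
        ENNReal.mul_ne_top (ENNReal.natCast_ne_top n) (by simp [hBf])
      obtain ⟨v, hv, hv'⟩ := lq_extremal volume hs hHm hB hBf hM
        (fun _ ω => lq_bdd volume hr' hB (trunc_bdd n F ω) (fun x hx => by
          by_contra hne
          exact hx (trunc_supp n F ω x hne).2)) (fun _ ω hω => by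
            have : ∀ x, trunc n F ω x ≤ 0 := fun x => by
              by_contra hne
              exact hω (trunc_supp n F ω x (by simpa using hne)).1
            have := lq_bdd volume hr' hB this (fun x _ => le_antisymm (this x) zero_le)
            simpa [hH] using this) hθ
      have hvm : Measurable (v ()) := hv.comp measurable_prodMk_left
      have h3 := h' (fun ω x => u ω x * v () ω) (hu.mul (hvm.comp measurable_fst))
      have h4 : mixN r s (fun ω x => u ω x * v () ω) ≤ 1 := by
        refine le_trans (lq_mono _ _ fun ω => ?_) (hv' ()).1
        exact lq_const_mul_le volume hr (hu.comp measurable_prodMk_left) _ (hu' ω).1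
      calc θ * (θ * mixN (dualExp r) (dualExp s) (trunc n F)) 
          ≤ θ * ∫⁻ ω, H () ω * v () ω := by gcongr; exact (hv' ()).2
        _ = ∫⁻ ω, θ * (H () ω * v () ω) := by
            rw [lintegral_const_mul]
            exact (lq_measurable volume (dualExp r) hFn).mul hvm
        _ ≤ ∫⁻ ω, ∫⁻ x, F ω x * (u ω x * v () ω) := by
            refine lintegral_mono fun ω => ?_
            dsimp only
            rw [← mul_assoc]
            calc _ ≤ (∫⁻ x, trunc n F ω x * u ω x) * v () ω := by gcongr; exact (hu' ω).2
              _ ≤ (∫⁻ x, F ω x * u ω x) * v () ω := by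
                  gcongr; exact trunc_le _ _ _ _
              _ ≤ ∫⁻ x, F ω x * u ω x * v () ω := lintegral_mul_const_le _ _
              _ = _ := by simp_rw [mul_assoc]
        _ ≤ A * 1 := h3.trans (by gcongr)
        _ = A := mul_one A
    -- let θ → 1
    have hlim : Filter.Tendsto (fun θ : ℝ≥0∞ => θ * (θ * mixN (dualExp r) (dualExp s) (trunc n F)))
        (nhdsWithin 1 (Set.Iio 1)) (nhds (1 * (1 * mixN (dualExp r) (dualExp s) (trunc n F)))) := by
      have h1 : Filter.Tendsto (fun θ : ℝ≥0∞ => θ) (nhdsWithin 1 (Set.Iio 1)) (nhds 1) :=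
        Filter.tendsto_id.mono_left nhdsWithin_le_nhds
      have h2 := ENNReal.Tendsto.mul_const (b := mixN (dualExp r) (dualExp s) (trunc n F)) h1 (by simp)
      exact ENNReal.Tendsto.mul h1 (by simp) h2 (by simp)
    have : (nhdsWithin (1 : ℝ≥0∞) (Set.Iio 1)).NeBot := nhdsLT_neBot_of_exists_lt ⟨0, by simp⟩
    have := le_of_tendsto hlim (eventually_nhdsWithin_of_forall hkey)
    simpa using this
  have e : F = fun ω x => ⨆ n, trunc n F ω x := by
    ext ω x; rw [trunc_iSup]
  calc mixN (dualExp r) (dualExp s) F 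
      = lqNorm volume (dualExp s) fun ω => lqNorm volume (dualExp r) fun x => ⨆ n, trunc n F ω x := by
        conv_lhs => rw [e]
        rfl
    _ ≤ lqNorm volume (dualExp s) fun ω => ⨆ n, lqNorm volume (dualExp r) (trunc n F ω) :=
        lq_mono _ _ fun ω => lq_iSup_le volume hr' 
          (fun n => (trunc_meas n hF).comp measurable_prodMk_left) 
          (fun m n hmn x => trunc_mono F ω x hmn)
    _ ≤ ⨆ n, mixN (dualExp r) (dualExp s) (trunc n F) := 
        lq_iSup_le volume hs' (fun n => lq_measurable volume _ (trunc_meas n hF)) 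
          (fun m n hmn ω => lq_mono _ _ fun x => trunc_mono F ω x hmn)
    _ ≤ A := iSup_le ht

end PartA2

section PartA3

variable {ι : Type} [Fintype ι]

theorem lq_map {α : Type*} [MeasurableSpace α] {μ : Measure α} (e : α ≃ᵐ α)
    (he : MeasurePreserving e μ μ) (p : ℝ≥0∞) (f : α → ℝ≥0∞) :
    lqNorm μ p (fun a => f (e a)) = lqNorm μ p f := by
  unfold lqNorm
  split_ifs
  · have := e.measurableEmbedding.essSup_map_measure (μ := μ) (g := f)
    rw [he.map_eq] at this
    exact this.symm
  · rw [he.lintegral_comp_emb e.measurableEmbedding (fun a => f a ^ p.toReal)]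

theorem lq_sub (p : ℝ≥0∞) (f : EuclideanSpace ℝ ι → ℝ≥0∞) (b : EuclideanSpace ℝ ι) :
    lqNorm volume p (fun a => f (a - b)) = lqNorm volume p f :=
  lq_map (MeasurableEquiv.subRight b) (measurePreserving_sub_right volume b) p f

theorem lq_neg (p : ℝ≥0∞) (f : EuclideanSpace ℝ ι → ℝ≥0∞) :
    lqNorm volume p (fun a => f (-a)) = lqNorm volume p f :=
  lq_map (MeasurableEquiv.neg _) (Measure.measurePreserving_neg volume) p f

theorem mix_sub (r s : ℝ≥0∞) (F : EuclideanSpace ℝ ι → EuclideanSpace ℝ ι → ℝ≥0∞)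
    (a b : EuclideanSpace ℝ ι) : mixN r s (fun ω x => F (ω - a) (x - b)) = mixN r s F := by
  unfold mixN
  simp_rw [fun ω => lq_sub r (F (ω - a)) b]
  exact lq_sub s (fun ω => lqNorm volume r (F ω)) a

theorem young {r s : ℝ≥0∞} (hr : 1 ≤ r) (hs : 1 ≤ s)
    {u : EuclideanSpace ℝ ι → EuclideanSpace ℝ ι → ℝ≥0∞} (hu : Measurable (Function.uncurry u))
    {Γ : EuclideanSpace ℝ ι × EuclideanSpace ℝ ι → ℝ≥0∞} (hΓ : Measurable Γ) :
    mixN r s (fun ω x => ∫⁻ w : EuclideanSpace ℝ ι × EuclideanSpace ℝ ι, u w.1 w.2 * Γ ((ω, x) - w))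
      ≤ (∫⁻ w, Γ w) * mixN r s u := by
  have hm1 : Measurable fun q : (EuclideanSpace ℝ ι × EuclideanSpace ℝ ι) ×
      (EuclideanSpace ℝ ι × EuclideanSpace ℝ ι) => u q.2.1 q.2.2 * Γ (q.1 - q.2) :=
    (hu.comp measurable_snd).mul (hΓ.comp (measurable_fst.sub measurable_snd))
  have hm2 : Measurable (Function.uncurry fun ω x : EuclideanSpace ℝ ι => 
      ∫⁻ w : EuclideanSpace ℝ ι × EuclideanSpace ℝ ι, u w.1 w.2 * Γ ((ω, x) - w)) := by
    have := Measurable.lintegral_prod_right' (ν := volume) hm1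
    exact this
  have key := mix_converse (one_le_dual hr) (one_le_dual hs) hm2 ((∫⁻ w, Γ w) * mixN r s u) ?_
  · rwa [dual_dual hr, dual_dual hs] at key
  intro v hv n _ _
  have e1 : ∀ z : EuclideanSpace ℝ ι × EuclideanSpace ℝ ι, 
      ∫⁻ w : EuclideanSpace ℝ ι × EuclideanSpace ℝ ι, u w.1 w.2 * Γ (z - w) =
      ∫⁻ w : EuclideanSpace ℝ ι × EuclideanSpace ℝ ι, u (z - w).1 (z - w).2 * Γ w := by
    intro z
    have : (volume : Measure (EuclideanSpace ℝ ι × EuclideanSpace ℝ ι)).IsAddHaarMeasure := 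
      inferInstanceAs (Measure.IsAddHaarMeasure ((volume : Measure (EuclideanSpace ℝ ι)).prod volume))
    have : (volume : Measure (EuclideanSpace ℝ ι × EuclideanSpace ℝ ι)).IsNegInvariant := by
      have hn := Measure.measurePreserving_neg (volume : Measure (EuclideanSpace ℝ ι))
      exact ⟨(hn.prod hn).map_eq⟩
    rw [← lintegral_sub_left_eq_self _ z]
    simp
  have hm3 : Measurable fun q : (EuclideanSpace ℝ ι × EuclideanSpace ℝ ι) ×
      (EuclideanSpace ℝ ι × EuclideanSpace ℝ ι) => u (q.1 - q.2).1 (q.1 - q.2).2 * Γ q.2 * v q.1.1 q.1.2 :=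
    ((hu.comp (measurable_fst.sub measurable_snd)).mul (hΓ.comp measurable_snd)).mul (hv.comp measurable_fst)
  have hm4 : ∀ z : EuclideanSpace ℝ ι × EuclideanSpace ℝ ι,
      Measurable fun w : EuclideanSpace ℝ ι × EuclideanSpace ℝ ι => u (z - w).1 (z - w).2 * Γ w := fun z =>
    (hu.comp (measurable_const.sub measurable_id)).mul hΓ
  calc ∫⁻ ω, ∫⁻ x, (∫⁻ w : EuclideanSpace ℝ ι × EuclideanSpace ℝ ι, u w.1 w.2 * Γ ((ω, x) - w)) * v ω x
      = ∫⁻ z : EuclideanSpace ℝ ι × EuclideanSpace ℝ ι, 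
        (∫⁻ w : EuclideanSpace ℝ ι × EuclideanSpace ℝ ι, u w.1 w.2 * Γ (z - w)) * v z.1 z.2 := by
        rw [Measure.volume_eq_prod, lintegral_prod _ (by exact (hm2.mul hv).aemeasurable)]
    _ = ∫⁻ z : EuclideanSpace ℝ ι × EuclideanSpace ℝ ι, 
        ∫⁻ w : EuclideanSpace ℝ ι × EuclideanSpace ℝ ι, u (z - w).1 (z - w).2 * Γ w * v z.1 z.2 := by
        refine lintegral_congr fun z => ?_
        rw [e1, lintegral_mul_const _ (hm4 z)]
    _ = ∫⁻ w : EuclideanSpace ℝ ι × EuclideanSpace ℝ ι, 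
        ∫⁻ z : EuclideanSpace ℝ ι × EuclideanSpace ℝ ι, u (z - w).1 (z - w).2 * Γ w * v z.1 z.2 :=
        lintegral_lintegral_swap hm3.aemeasurable
    _ ≤ ∫⁻ w : EuclideanSpace ℝ ι × EuclideanSpace ℝ ι, 
        Γ w * (mixN r s u * mixN (dualExp r) (dualExp s) v) := by
        refine lintegral_mono fun w => ?_
        have hmu : Measurable fun z : EuclideanSpace ℝ ι × EuclideanSpace ℝ ι => u (z - w).1 (z - w).2 :=
          hu.comp (measurable_id.sub measurable_const)
        have e : ∀ z : EuclideanSpace ℝ ι × EuclideanSpace ℝ ι, u (z - w).1 (z - w).2 * Γ w * v z.1 z.2 =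
          Γ w * (u (z - w).1 (z - w).2 * v z.1 z.2) := fun z => by ring
        simp_rw [e]
        rw [lintegral_const_mul _ (by exact hmu.mul hv)]
        gcongr
        rw [Measure.volume_eq_prod, lintegral_prod _ (by exact (hmu.mul hv).aemeasurable)]
        have := mix_holder (one_le_dual hr) (one_le_dual hs) (F := fun ω x => u (ω - w.1) (x - w.2)) (G := v)
          hmu hv
        rw [dual_dual hr, dual_dual hs, mix_sub] at this
        exact this
    _ = _ := by rw [lintegral_mul_const _ hΓ]; ring

end PartA3

section PartC1

variable {ι : Type} [Fintype ι]

theorem gw_ofReal (t : EuclideanSpace ℝ ι) : gaussWin t = ((Real.exp (-(Real.pi * ‖t‖ ^ 2)) : ℝ) : ℂ) := by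
  simp [gaussWin]

theorem gw_conj (t : EuclideanSpace ℝ ι) : (starRingEnd ℂ) (gaussWin t) = gaussWin t := by
  rw [gw_ofReal, Complex.conj_ofReal]

theorem gw_norm (t : EuclideanSpace ℝ ι) : ‖gaussWin t‖ = Real.exp (-(Real.pi * ‖t‖ ^ 2)) := by
  rw [gw_ofReal, Complex.norm_real, Real.norm_of_nonneg (Real.exp_nonneg _)]

theorem gw_le_one (t : EuclideanSpace ℝ ι) : ‖gaussWin t‖ ≤ 1 := by
  rw [gw_norm, Real.exp_le_one_iff]
  have := Real.pi_pos
  simp only [neg_nonpos]; positivity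

theorem gw_cont : Continuous (gaussWin : EuclideanSpace ℝ ι → ℂ) := by
  unfold gaussWin; fun_prop

theorem gauss_integrable {b : ℝ} (hb : 0 < b) :
    Integrable fun t : EuclideanSpace ℝ ι => Real.exp (-(b * ‖t‖ ^ 2)) := by
  have h := (GaussianFourier.integrable_cexp_neg_mul_sq_norm_add (V := EuclideanSpace ℝ ι) (b := b) 
    (by simpa using hb) 0 0).norm
  refine h.congr (.of_forall fun t => ?_)
  simp only [zero_mul, add_zero, Complex.norm_exp]
  congr 1
  have : -(b : ℂ) * (‖t‖ : ℂ) ^ 2 = ((-(b * ‖t‖ ^ 2) : ℝ) : ℂ) := by push_cast; ring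
  rw [this, Complex.ofReal_re]

theorem gw_integrable : Integrable (gaussWin : EuclideanSpace ℝ ι → ℂ) := by
  have := (gauss_integrable (ι := ι) Real.pi_pos).ofReal (𝕜 := ℂ)
  refine this.congr (.of_forall fun t => ?_)
  simp [gaussWin]

theorem phase_norm (a : ℝ) : ‖cexp (Complex.I * (2 * Real.pi * (a : ℂ)))‖ = 1 := by
  have : Complex.I * (2 * Real.pi * (a : ℂ)) = ((2 * Real.pi * a : ℝ) : ℂ) * Complex.I := by
    push_cast; ring
  rw [this, Complex.norm_exp_ofReal_mul_I]

theorem phase_norm_neg (a : ℝ) : ‖cexp (Complex.I * (-(2 * Real.pi * (a : ℂ))))‖ = 1 := by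
  have := phase_norm (-a)
  simpa using this

theorem amb : ∃ K : ℝ, 0 ≤ K ∧ ∀ x y θ : EuclideanSpace ℝ ι,
    ‖∫ t : EuclideanSpace ℝ ι, gaussWin (t - x) * gaussWin (t - y) *
      cexp (Complex.I * (2 * Real.pi * (inner ℝ θ t : ℝ)))‖ ≤
    K * (Real.exp (-(Real.pi / 2 * ‖θ‖ ^ 2)) * Real.exp (-(Real.pi / 2 * ‖x - y‖ ^ 2))) := by
  refine ⟨‖(Real.pi / ((2 * Real.pi : ℝ) : ℂ)) ^ ((Module.finrank ℝ (EuclideanSpace ℝ ι) : ℂ) / 2)‖, 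
    norm_nonneg _, fun x y θ => ?_⟩
  have e1 : ∀ t : EuclideanSpace ℝ ι, gaussWin (t + (2:ℝ)⁻¹ • (x + y) - x) * 
      gaussWin (t + (2:ℝ)⁻¹ • (x + y) - y) *
      cexp (Complex.I * (2 * Real.pi * (inner ℝ θ (t + (2:ℝ)⁻¹ • (x + y)) : ℝ))) =
      (cexp (Complex.I * (2 * Real.pi * (inner ℝ θ ((2:ℝ)⁻¹ • (x + y)) : ℝ))) * 
        cexp (-(Real.pi / 2 * ‖x - y‖ ^ 2))) *
      cexp (-((2 * Real.pi : ℝ) : ℂ) * ‖t‖ ^ 2 + (2 * Real.pi * Complex.I) * (inner ℝ θ t : ℝ)) := by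
    intro t
    have n1 : ‖t + (2:ℝ)⁻¹ • (x + y) - x‖ ^ 2 + ‖t + (2:ℝ)⁻¹ • (x + y) - y‖ ^ 2 = 
        2 * ‖t‖ ^ 2 + 2⁻¹ * ‖x - y‖ ^ 2 := by
      have a1 : t + (2:ℝ)⁻¹ • (x + y) - x = t - (2:ℝ)⁻¹ • (x - y) := by module
      have a2 : t + (2:ℝ)⁻¹ • (x + y) - y = t + (2:ℝ)⁻¹ • (x - y) := by module
      rw [a1, a2]
      have := parallelogram_law_with_norm ℝ t ((2:ℝ)⁻¹ • (x - y))
      rw [norm_smul] at this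
      norm_num at this
      nlinarith [this]
    have n2 : ((‖t + (2:ℝ)⁻¹ • (x + y) - x‖ : ℂ)) ^ 2 + (‖t + (2:ℝ)⁻¹ • (x + y) - y‖ : ℂ) ^ 2 = 
        2 * (‖t‖ : ℂ) ^ 2 + 2⁻¹ * (‖x - y‖ : ℂ) ^ 2 := by
      have := congrArg (fun r : ℝ => (r : ℂ)) n1
      push_cast at this
      exact this
    unfold gaussWin
    rw [inner_add_right, ← Complex.exp_add, ← Complex.exp_add, ← Complex.exp_add, ← Complex.exp_add]
    congr 1
    push_cast
    linear_combination (-(Real.pi : ℂ)) * n2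
  rw [← integral_add_right_eq_self _ ((2:ℝ)⁻¹ • (x + y))]
  simp_rw [e1]
  rw [integral_const_mul, GaussianFourier.integral_cexp_neg_mul_sq_norm_add (by simpa using Real.pi_pos), norm_mul, norm_mul,
    norm_mul, phase_norm, one_mul]
  have h1 : ‖cexp (-(Real.pi / 2 * ‖x - y‖ ^ 2))‖ = Real.exp (-(Real.pi / 2 * ‖x - y‖ ^ 2)) := by
    rw [show (-(Real.pi / 2 * ‖x - y‖ ^ 2) : ℂ) = ((-(Real.pi / 2 * ‖x - y‖ ^ 2) : ℝ) : ℂ) by push_cast; rfl,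
      Complex.norm_exp, Complex.ofReal_re]
  have h2 : ‖cexp ((2 * Real.pi * Complex.I) ^ 2 * ‖θ‖ ^ 2 / (4 * ((2 * Real.pi : ℝ) : ℂ)))‖ = 
      Real.exp (-(Real.pi / 2 * ‖θ‖ ^ 2)) := by
    have : (2 * Real.pi * Complex.I) ^ 2 * ‖θ‖ ^ 2 / (4 * ((2 * Real.pi : ℝ) : ℂ)) = 
        ((-(Real.pi / 2 * ‖θ‖ ^ 2) : ℝ) : ℂ) := by
      have : (Real.pi : ℂ) ≠ 0 := by exact_mod_cast Real.pi_ne_zero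
      push_cast
      field_simp
      rw [Complex.I_sq]
      ring
    rw [this, Complex.norm_exp, Complex.ofReal_re]
  rw [h1, h2]
  apply le_of_eq; ring

theorem synth {n : ℝ} (Ψ : EuclideanSpace ℝ ι × EuclideanSpace ℝ ι → ℂ) (hΨm : Measurable Ψ)
    (hb : ∀ z, ‖Ψ z‖ ≤ n) (hs : ∀ z, Ψ z ≠ 0 → ‖z.1‖ ≤ n ∧ ‖z.2‖ ≤ n) :
    ∃ g : 𝓢(EuclideanSpace ℝ ι, ℂ), ∀ t, g t = ∫ z, Ψ z * (gaussWin (t - z.2) * 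
      cexp (Complex.I * (2 * Real.pi * (inner ℝ z.1 t : ℝ)))) := by
  have hpi := Real.pi_pos
  let Q : (EuclideanSpace ℝ ι × EuclideanSpace ℝ ι) × EuclideanSpace ℝ ι → ℂ := fun v =>
    -(Real.pi : ℂ) * ((‖v.1.1‖ ^ 2 : ℝ) : ℂ) + -(Real.pi : ℂ) * ((‖v.1.2‖ ^ 2 : ℝ) : ℂ) + 
      -(Real.pi : ℂ) * ((‖v.2 - v.1.2‖ ^ 2 : ℝ) : ℂ) +
      (Complex.I * Real.pi / 2) * (((‖v.1.1 + v.2‖ ^ 2 : ℝ) : ℂ) - ((‖v.1.1 - v.2‖ ^ 2 : ℝ) : ℂ))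
  have htg : ∀ L : (EuclideanSpace ℝ ι × EuclideanSpace ℝ ι) × EuclideanSpace ℝ ι →L[ℝ] EuclideanSpace ℝ ι,
      (fun v => ((‖L v‖ ^ 2 : ℝ) : ℂ)).HasTemperateGrowth := fun L =>
    Function.Complex.hasTemperateGrowth_ofReal.comp 
      ((Function.hasTemperateGrowth_norm_sq (H := EuclideanSpace ℝ ι)).comp L.hasTemperateGrowth)
  let p1 := (ContinuousLinearMap.fst ℝ (EuclideanSpace ℝ ι) (EuclideanSpace ℝ ι)).comp 
    (ContinuousLinearMap.fst ℝ (EuclideanSpace ℝ ι × EuclideanSpace ℝ ι) (EuclideanSpace ℝ ι))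
  let p2 := (ContinuousLinearMap.snd ℝ (EuclideanSpace ℝ ι) (EuclideanSpace ℝ ι)).comp 
    (ContinuousLinearMap.fst ℝ (EuclideanSpace ℝ ι × EuclideanSpace ℝ ι) (EuclideanSpace ℝ ι))
  let p3 := (ContinuousLinearMap.snd ℝ (EuclideanSpace ℝ ι × EuclideanSpace ℝ ι) (EuclideanSpace ℝ ι))
  have hQ : Q.HasTemperateGrowth :=
    ((((Function.HasTemperateGrowth.const _).mul (htg p1)).add 
      ((Function.HasTemperateGrowth.const _).mul (htg p2))).add
      ((Function.HasTemperateGrowth.const _).mul (htg (p3 - p2)))).add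
      ((Function.HasTemperateGrowth.const _).mul ((htg (p1 + p3)).sub (htg (p1 - p3))))
  have hre : ∀ v, (Q v).re ≤ 0 - Real.pi / 2 * ‖v‖ ^ 2 := by
    intro v
    have e : (Q v).re = -Real.pi * ‖v.1.1‖ ^ 2 + -Real.pi * ‖v.1.2‖ ^ 2 + 
        -Real.pi * ‖v.2 - v.1.2‖ ^ 2 := by
      have : Q v = ((-Real.pi * ‖v.1.1‖ ^ 2 + -Real.pi * ‖v.1.2‖ ^ 2 + 
        -Real.pi * ‖v.2 - v.1.2‖ ^ 2 : ℝ) : ℂ) + 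
        ((Real.pi / 2 * (‖v.1.1 + v.2‖ ^ 2 - ‖v.1.1 - v.2‖ ^ 2) : ℝ) : ℂ) * Complex.I := by
        simp only [Q]; push_cast; ring
      rw [this]
      simp only [Complex.add_re, Complex.re_ofReal_mul, Complex.I_re, mul_zero, add_zero, Complex.ofReal_re]
    have h3 : ‖v.2‖ ^ 2 ≤ 2 * ‖v.2 - v.1.2‖ ^ 2 + 2 * ‖v.1.2‖ ^ 2 := by
      have : ‖v.2‖ ≤ ‖v.2 - v.1.2‖ + ‖v.1.2‖ := by
        simpa using norm_add_le (v.2 - v.1.2) v.1.2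
      nlinarith [sq_nonneg (‖v.2 - v.1.2‖ - ‖v.1.2‖), norm_nonneg v.2, norm_nonneg (v.2 - v.1.2), 
        norm_nonneg v.1.2]
    rw [e]
    have hv : ‖v‖ = max (max ‖v.1.1‖ ‖v.1.2‖) ‖v.2‖ := rfl
    have : ‖v‖ ^ 2 ≤ 2 * (‖v.1.1‖ ^ 2 + ‖v.1.2‖ ^ 2 + ‖v.2 - v.1.2‖ ^ 2) := by
      have q1 := sq_nonneg ‖v.1.1‖
      have q2 := sq_nonneg ‖v.1.2‖
      have q3 := sq_nonneg ‖v.2 - v.1.2‖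
      rw [hv]
      rcases max_choice (max ‖v.1.1‖ ‖v.1.2‖) ‖v.2‖ with h | h <;> rw [h]
      · rcases max_choice ‖v.1.1‖ ‖v.1.2‖ with h | h <;> rw [h] <;> linarith
      · linarith
    nlinarith
  obtain ⟨S, hS⟩ := expQ_schwartz hQ (by positivity) hre
  have hW : Continuous fun z : EuclideanSpace ℝ ι × EuclideanSpace ℝ ι => 
      Real.exp (Real.pi * (‖z.1‖ ^ 2 + ‖z.2‖ ^ 2)) := by fun_prop
  have hint : Integrable (fun z : EuclideanSpace ℝ ι × EuclideanSpace ℝ ι => 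
      Ψ z * ((Real.exp (Real.pi * (‖z.1‖ ^ 2 + ‖z.2‖ ^ 2)) : ℝ) : ℂ)) := by
    have hm : Measurable (fun z : EuclideanSpace ℝ ι × EuclideanSpace ℝ ι => 
      Ψ z * ((Real.exp (Real.pi * (‖z.1‖ ^ 2 + ‖z.2‖ ^ 2)) : ℝ) : ℂ)) := 
      hΨm.mul (Complex.continuous_ofReal.comp hW).measurable
    have hBm : MeasurableSet (Metric.closedBall (0 : EuclideanSpace ℝ ι × EuclideanSpace ℝ ι) n) := 
      Metric.isClosed_closedBall.measurableSet
    have : Integrable ((Metric.closedBall (0 : EuclideanSpace ℝ ι × EuclideanSpace ℝ ι) n).indicator 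
        fun _ => n * Real.exp (Real.pi * (n ^ 2 + n ^ 2))) := by
      rw [integrable_indicator_iff hBm]
      refine integrableOn_const ?_
      exact (isCompact_closedBall (0 : EuclideanSpace ℝ ι × EuclideanSpace ℝ ι) n).measure_lt_top.ne
    refine this.mono' hm.aestronglyMeasurable (.of_forall fun z => ?_)
    by_cases hz : Ψ z = 0
    · rw [hz]
      simp only [zero_mul, norm_zero]
      refine Set.indicator_nonneg (fun _ _ => ?_) _
      have := (norm_nonneg _).trans (hb 0)
      positivity
    · obtain ⟨h1, h2⟩ := hs z hz
      have : z ∈ Metric.closedBall (0 : EuclideanSpace ℝ ι × EuclideanSpace ℝ ι) n := by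
        rw [mem_closedBall_zero_iff]
        exact max_le h1 h2
      rw [Set.indicator_of_mem this, norm_mul, Complex.norm_real, Real.norm_of_nonneg (Real.exp_nonneg _)]
      have := hb z
      gcongr
      exact (norm_nonneg _).trans this
  obtain ⟨g, hg⟩ := int_schwartz volume _ hint S
  refine ⟨g, fun t => ?_⟩
  rw [hg]
  refine integral_congr_ae (.of_forall fun z => ?_)
  simp only [hS, smul_eq_mul, gaussWin, mul_assoc, Complex.ofReal_exp, ← Complex.exp_add]
  congr 2
  have : inner ℝ z.1 t = (‖z.1 + t‖ ^ 2 - ‖z.1 - t‖ ^ 2) / 4 := by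
    rw [norm_add_sq_real, norm_sub_sq_real]; ring
  simp only [this, Q]
  push_cast
  ring

end PartC1

section PartC2

variable {ι : Type} [Fintype ι]

theorem phase_conj (a : ℝ) : (starRingEnd ℂ) (cexp (Complex.I * (2 * Real.pi * (a : ℂ)))) =
    cexp (Complex.I * (-(2 * Real.pi * (a : ℂ)))) := by
  rw [← Complex.exp_conj]
  congr 1
  have : Complex.I * (2 * Real.pi * (a : ℂ)) = ((2 * Real.pi * a : ℝ) : ℂ) * Complex.I := by
    push_cast; ring
  rw [this, map_mul, Complex.conj_ofReal, Complex.conj_I]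
  push_cast; ring

theorem stft_meas {F : EuclideanSpace ℝ ι → ℂ} (hF : Measurable F) :
    Measurable fun z : EuclideanSpace ℝ ι × EuclideanSpace ℝ ι => STFT F z.2 z.1 := by
  have hm : Measurable fun q : (EuclideanSpace ℝ ι × EuclideanSpace ℝ ι) × EuclideanSpace ℝ ι =>
      F q.2 * (starRingEnd ℂ) (gaussWin (q.2 - q.1.2)) *
      cexp (Complex.I * (-(2 * Real.pi * (inner ℝ q.1.1 q.2 : ℝ)))) := by
    refine ((hF.comp measurable_snd).mul ?_).mul ?_
    · have : Continuous fun q : (EuclideanSpace ℝ ι × EuclideanSpace ℝ ι) × EuclideanSpace ℝ ι =>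
        (starRingEnd ℂ) (gaussWin (q.2 - q.1.2)) := by
        simp_rw [gw_conj]
        exact gw_cont.comp (by fun_prop)
      exact this.measurable
    · exact Continuous.measurable (by fun_prop)
  exact (hm.stronglyMeasurable.integral_prod_right' (ν := volume)).measurable

theorem stft_enorm_meas {F : EuclideanSpace ℝ ι → ℂ} (hF : Measurable F) :
    Measurable (Function.uncurry fun ω x : EuclideanSpace ℝ ι => (‖STFT F x ω‖₊ : ℝ≥0∞)) :=
  (stft_meas hF).nnnorm.coe_nnreal_ennreal

theorem modNorm_eq (r s : ℝ≥0∞) (F : EuclideanSpace ℝ ι → ℂ) :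
    modNorm r s F = mixN r s fun ω x => (‖STFT F x ω‖₊ : ℝ≥0∞) := rfl

theorem psi_int {n : ℝ} (Ψ : EuclideanSpace ℝ ι × EuclideanSpace ℝ ι → ℂ) (hΨm : Measurable Ψ)
    (hb : ∀ z, ‖Ψ z‖ ≤ n) (hs : ∀ z, Ψ z ≠ 0 → ‖z.1‖ ≤ n ∧ ‖z.2‖ ≤ n) : Integrable Ψ := by
  have hBm : MeasurableSet (Metric.closedBall (0 : EuclideanSpace ℝ ι × EuclideanSpace ℝ ι) n) := 
    Metric.isClosed_closedBall.measurableSet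
  have : Integrable ((Metric.closedBall (0 : EuclideanSpace ℝ ι × EuclideanSpace ℝ ι) n).indicator 
      fun _ => n) := by
    rw [integrable_indicator_iff hBm]
    refine integrableOn_const ?_
    exact (isCompact_closedBall (0 : EuclideanSpace ℝ ι × EuclideanSpace ℝ ι) n).measure_lt_top.ne
  refine this.mono' hΨm.aestronglyMeasurable (.of_forall fun z => ?_)
  by_cases hz : Ψ z = 0
  · rw [hz, norm_zero]
    exact Set.indicator_nonneg (fun _ _ => (norm_nonneg _).trans (hb 0)) _
  · obtain ⟨h1, h2⟩ := hs z hz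
    have : z ∈ Metric.closedBall (0 : EuclideanSpace ℝ ι × EuclideanSpace ℝ ι) n := by
      rw [mem_closedBall_zero_iff]
      exact max_le h1 h2
    rw [Set.indicator_of_mem this]
    exact hb z

/-- Gaussian majorant. -/
noncomputable def Gam (K : ℝ) (w : EuclideanSpace ℝ ι × EuclideanSpace ℝ ι) : ℝ≥0∞ :=
  ENNReal.ofReal (K * (Real.exp (-(Real.pi / 2 * ‖w.1‖ ^ 2)) * Real.exp (-(Real.pi / 2 * ‖w.2‖ ^ 2))))

theorem Gam_meas (K : ℝ) : Measurable (Gam K : EuclideanSpace ℝ ι × EuclideanSpace ℝ ι → ℝ≥0∞) := by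
  refine ENNReal.measurable_ofReal.comp (Continuous.measurable ?_)
  fun_prop

theorem Gam_fin (K : ℝ) : ∫⁻ w, (Gam K : EuclideanSpace ℝ ι × EuclideanSpace ℝ ι → ℝ≥0∞) w ≠ ∞ := by
  have h := gauss_integrable (ι := ι) (b := Real.pi / 2) (by have := Real.pi_pos; positivity)
  have := ((h.mul_prod h).const_mul K).lintegral_lt_top
  exact this.ne

theorem stft_bdd {K : ℝ} (hK : ∀ x y θ : EuclideanSpace ℝ ι,
    ‖∫ t : EuclideanSpace ℝ ι, gaussWin (t - x) * gaussWin (t - y) *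
      cexp (Complex.I * (2 * Real.pi * (inner ℝ θ t : ℝ)))‖ ≤
    K * (Real.exp (-(Real.pi / 2 * ‖θ‖ ^ 2)) * Real.exp (-(Real.pi / 2 * ‖x - y‖ ^ 2))))
    (Ψ : EuclideanSpace ℝ ι × EuclideanSpace ℝ ι → ℂ) (hΨ : Integrable Ψ)
    (g : EuclideanSpace ℝ ι → ℂ) (hg : ∀ t, g t = ∫ z, Ψ z * (gaussWin (t - z.2) * 
      cexp (Complex.I * (2 * Real.pi * (inner ℝ z.1 t : ℝ))))) (y η : EuclideanSpace ℝ ι) :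
    (‖STFT g y η‖₊ : ℝ≥0∞) ≤ ∫⁻ z : EuclideanSpace ℝ ι × EuclideanSpace ℝ ι, ‖Ψ z‖ₑ * Gam K ((η, y) - z) := by
  have e1 : STFT g y η = ∫ t, ∫ z : EuclideanSpace ℝ ι × EuclideanSpace ℝ ι, 
      (Ψ z * gaussWin (t - y)) * (gaussWin (t - z.2) * 
      cexp (Complex.I * (2 * Real.pi * (inner ℝ (z.1 - η) t : ℝ)))) := by
    unfold STFT
    refine integral_congr_ae (.of_forall fun t => ?_)
    dsimp only
    rw [hg, gw_conj, ← integral_mul_const, ← integral_mul_const]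
    refine integral_congr_ae (.of_forall fun z => ?_)
    dsimp only
    have : cexp (Complex.I * (2 * Real.pi * (inner ℝ (z.1 - η) t : ℝ))) = 
        cexp (Complex.I * (2 * Real.pi * (inner ℝ z.1 t : ℝ))) * 
        cexp (Complex.I * (-(2 * Real.pi * (inner ℝ η t : ℝ)))) := by
      rw [← Complex.exp_add, inner_sub_left]
      congr 1
      push_cast; ring
    rw [this]
    ring
  have hint : Integrable (Function.uncurry fun (t : EuclideanSpace ℝ ι) 
      (z : EuclideanSpace ℝ ι × EuclideanSpace ℝ ι) => 
      (Ψ z * gaussWin (t - y)) * (gaussWin (t - z.2) * 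
      cexp (Complex.I * (2 * Real.pi * (inner ℝ (z.1 - η) t : ℝ))))) (volume.prod volume) := by
    have h1 := ((gw_integrable (ι := ι)).comp_sub_right y).mul_prod hΨ
    have hc : Continuous fun q : EuclideanSpace ℝ ι × (EuclideanSpace ℝ ι × EuclideanSpace ℝ ι) => 
      (gaussWin (q.1 - q.2.2) * 
      cexp (Complex.I * (2 * Real.pi * (inner ℝ (q.2.1 - η) q.1 : ℝ)))) := by
      refine (gw_cont.comp (by fun_prop)).mul (by fun_prop)
    refine (h1.mul_bdd (c := 1) hc.aestronglyMeasurable (.of_forall fun q => ?_)).congr 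
      (.of_forall fun q => ?_)
    · rw [norm_mul, phase_norm, mul_one]
      exact gw_le_one _
    · simp only [Function.uncurry]; ring
  rw [e1, integral_integral_swap hint]
  refine (enorm_integral_le_lintegral_enorm _).trans (lintegral_mono fun z => ?_)
  dsimp only
  have e2 : ∫ t : EuclideanSpace ℝ ι, (Ψ z * gaussWin (t - y)) * (gaussWin (t - z.2) * 
      cexp (Complex.I * (2 * Real.pi * (inner ℝ (z.1 - η) t : ℝ)))) = 
      Ψ z * ∫ t : EuclideanSpace ℝ ι, gaussWin (t - z.2) * gaussWin (t - y) *
      cexp (Complex.I * (2 * Real.pi * (inner ℝ (z.1 - η) t : ℝ))) := by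
    rw [← integral_const_mul]
    refine integral_congr_ae (.of_forall fun t => ?_)
    dsimp only
    ring
  rw [e2, enorm_mul]
  gcongr
  rw [← ofReal_norm, Gam]
  refine ENNReal.ofReal_le_ofReal ((hK _ _ _).trans (le_of_eq ?_))
  rw [norm_sub_rev z.1, norm_sub_rev z.2]
  rfl

theorem pair_synth {H : EuclideanSpace ℝ ι → ℂ} (hH : Measurable H) {M : ℝ} (hM : ∀ t, ‖H t‖ ≤ M)
    (Ψ : EuclideanSpace ℝ ι × EuclideanSpace ℝ ι → ℂ) (hΨ : Integrable Ψ)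
    (g : EuclideanSpace ℝ ι → ℂ) (hg : ∀ t, g t = ∫ z, Ψ z * (gaussWin (t - z.2) * 
      cexp (Complex.I * (2 * Real.pi * (inner ℝ z.1 t : ℝ))))) :
    ∫ t, H t * (starRingEnd ℂ) (g t) = ∫ z, (starRingEnd ℂ) (Ψ z) * STFT H z.2 z.1 := by
  have e1 : ∀ t, H t * (starRingEnd ℂ) (g t) = ∫ z : EuclideanSpace ℝ ι × EuclideanSpace ℝ ι,
      (starRingEnd ℂ) (Ψ z) * gaussWin (t - z.2) * 
        (H t * cexp (Complex.I * (-(2 * Real.pi * (inner ℝ z.1 t : ℝ))))) := by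
    intro t
    rw [hg, ← integral_conj, ← integral_const_mul]
    refine integral_congr_ae (.of_forall fun z => ?_)
    simp only [map_mul, gw_conj, phase_conj]
    ring
  simp_rw [e1]
  rw [integral_integral_swap]
  · refine integral_congr_ae (.of_forall fun z => ?_)
    dsimp only
    unfold STFT
    rw [← integral_const_mul]
    refine integral_congr_ae (.of_forall fun t => ?_)
    simp only [gw_conj]
    ring
  · have hΨc : Integrable fun z => (starRingEnd ℂ) (Ψ z) := 
      (Complex.conjCLE.toContinuousLinearMap.integrable_comp hΨ)
    have h0 : Integrable (fun q : (EuclideanSpace ℝ ι × EuclideanSpace ℝ ι) × EuclideanSpace ℝ ι => 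
        (starRingEnd ℂ) (Ψ q.1) * gaussWin (q.2 - q.1.2)) (volume.prod volume) := by
      have hc : Continuous fun q : (EuclideanSpace ℝ ι × EuclideanSpace ℝ ι) × EuclideanSpace ℝ ι =>
        gaussWin (q.2 - q.1.2) := gw_cont.comp (by fun_prop)
      rw [integrable_prod_iff (by exact hΨc.1.comp_fst.mul hc.aestronglyMeasurable)]
      refine ⟨.of_forall fun z => ?_, ?_⟩
      · exact ((gw_integrable (ι := ι)).comp_sub_right z.2).const_mul ((starRingEnd ℂ) (Ψ z))
      · simp only [norm_mul]
        have : ∀ z : EuclideanSpace ℝ ι × EuclideanSpace ℝ ι, ∫ t, ‖(starRingEnd ℂ) (Ψ z)‖ * 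
            ‖gaussWin (t - z.2)‖ = ‖(starRingEnd ℂ) (Ψ z)‖ * ∫ t : EuclideanSpace ℝ ι, ‖gaussWin t‖ := by
          intro z
          rw [integral_const_mul, integral_sub_right_eq_self (fun t => ‖gaussWin t‖)]
        simp_rw [this]
        exact hΨc.norm.mul_const _
    have hm : Measurable fun q : (EuclideanSpace ℝ ι × EuclideanSpace ℝ ι) × EuclideanSpace ℝ ι =>
        (H q.2 * cexp (Complex.I * (-(2 * Real.pi * (inner ℝ q.1.1 q.2 : ℝ))))) :=
      (hH.comp measurable_snd).mul (Continuous.measurable (by fun_prop))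
    have := (h0.mul_bdd (c := M) hm.aestronglyMeasurable (.of_forall fun q => by
      rw [norm_mul, phase_norm_neg, mul_one]; exact hM _)).swap
    exact this

end PartC2

section PartC3

variable {ι : Type} [Fintype ι]

theorem gw_schwartz (x : EuclideanSpace ℝ ι) : 
    (fun t : EuclideanSpace ℝ ι => gaussWin (t - x)).HasTemperateGrowth := by
  have hpi := Real.pi_pos
  have hQ : (fun t : EuclideanSpace ℝ ι => -(Real.pi : ℂ) * ((‖t‖ ^ 2 : ℝ) : ℂ)).HasTemperateGrowth :=
    (Function.HasTemperateGrowth.const _).mul (Function.Complex.hasTemperateGrowth_ofReal.comp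
      (Function.hasTemperateGrowth_norm_sq (H := EuclideanSpace ℝ ι)))
  obtain ⟨S, hS⟩ := expQ_schwartz (C := 0) hQ hpi (fun v => by
    rw [show (-(Real.pi : ℂ) * ((‖v‖ ^ 2 : ℝ) : ℂ)) = ((-Real.pi * ‖v‖ ^ 2 : ℝ) : ℂ) by push_cast; ring,
      Complex.ofReal_re]
    linarith)
  have h1 : (gaussWin : EuclideanSpace ℝ ι → ℂ) = S := by
    ext t
    rw [hS, gaussWin]
    push_cast
    congr 1; ring
  rw [h1]
  exact S.hasTemperateGrowth.comp (Function.HasTemperateGrowth.id'.sub (.const x))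

theorem stft_fourier (F : EuclideanSpace ℝ ι → ℂ) (x ω : EuclideanSpace ℝ ι) :
    STFT F x ω = FourierTransform.fourier (fun t => F t * gaussWin (t - x)) ω := by
  rw [Real.fourier_eq' , STFT]
  refine integral_congr_ae (.of_forall fun t => ?_)
  simp only [gw_conj, smul_eq_mul]
  rw [mul_comm]
  congr 2
  rw [real_inner_comm]
  push_cast
  ring

theorem parseval_x (f : 𝓢(EuclideanSpace ℝ ι, ℂ)) {h : EuclideanSpace ℝ ι → ℂ} (hh : Measurable h) {M : ℝ}
    (hM : ∀ t, ‖h t‖ ≤ M) (x : EuclideanSpace ℝ ι) :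
    ∫ ω, (starRingEnd ℂ) (STFT h x ω) * STFT f x ω = 
      ∫ t, (starRingEnd ℂ) (h t) * f t * (gaussWin (t - x) * gaussWin (t - x)) := by
  have hF := SchwartzMap.smulLeftCLM_apply_apply (gw_schwartz x) f
  set F := SchwartzMap.smulLeftCLM ℂ (fun t : EuclideanSpace ℝ ι => gaussWin (t - x)) f with hFdef
  have hF' : (fun t => f t * gaussWin (t - x)) = ⇑F := by
    ext t; rw [hF, smul_eq_mul, mul_comm]
  have hk : Integrable fun t => h t * gaussWin (t - x) :=
    ((gw_integrable (ι := ι)).comp_sub_right x).bdd_mul (c := M) hh.aestronglyMeasurable (.of_forall hM)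
  have key := VectorFourier.integral_sesq_fourierIntegral_eq_neg_flip (innerSL ℂ : ℂ →L⋆[ℂ] ℂ →L[ℂ] ℂ)
    (L := innerₗ (EuclideanSpace ℝ ι)) Real.continuous_fourierChar continuous_inner hk (μ := volume) (ν := volume)
    (FourierTransform.fourier F).integrable
  have e2 : ∀ t, VectorFourier.fourierIntegral Real.fourierChar volume (-(innerₗ (EuclideanSpace ℝ ι)).flip)
      (FourierTransform.fourier F) t = F t := by
    intro t
    have : FourierTransformInv.fourierInv (FourierTransform.fourier F) t = F t := by simp
    rw [← this, fourierInv_coe]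
    simp [FourierTransformInv.fourierInv]
  simp_rw [e2] at key
  simp_rw [stft_fourier, hF']
  simp only [innerSL_apply_apply, RCLike.inner_apply] at key
  refine Eq.trans (integral_congr_ae (.of_forall fun ω => ?_)) (key.trans 
    (integral_congr_ae (.of_forall fun t => ?_)))
  · dsimp only
    rw [mul_comm, fourier_coe]
    rfl
  · dsimp only
    rw [hF, map_mul, gw_conj, smul_eq_mul]
    ring

theorem gw_sq_ne : (∫ t : EuclideanSpace ℝ ι, gaussWin t * gaussWin t) ≠ 0 := by
  have hpi := Real.pi_pos
  have h1 := GaussianFourier.integral_rexp_neg_mul_sq_norm (V := EuclideanSpace ℝ ι) (b := 2 * Real.pi) 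
    (by positivity)
  have h2 : ∀ t : EuclideanSpace ℝ ι, gaussWin t * gaussWin t = 
      ((Real.exp (-(2 * Real.pi) * ‖t‖ ^ 2) : ℝ) : ℂ) := by
    intro t
    rw [gw_ofReal, ← Complex.ofReal_mul, ← Real.exp_add]
    congr 2; ring
  simp_rw [h2]
  rw [integral_complex_ofReal, h1]
  have : 0 < (Real.pi / (2 * Real.pi)) ^ ((Module.finrank ℝ (EuclideanSpace ℝ ι) : ℝ) / 2) := by positivity
  exact_mod_cast this.ne'

theorem parseval_le (f : 𝓢(EuclideanSpace ℝ ι, ℂ)) {h : EuclideanSpace ℝ ι → ℂ} (hh : Measurable h) {M : ℝ}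
    (hM : ∀ t, ‖h t‖ ≤ M) :
    ‖∫ t, (starRingEnd ℂ) (h t) * f t‖ₑ * ‖∫ t : EuclideanSpace ℝ ι, gaussWin t * gaussWin t‖ₑ ≤ 
      ∫⁻ ω : EuclideanSpace ℝ ι, ∫⁻ x : EuclideanSpace ℝ ι, 
        (‖STFT f x ω‖₊ : ℝ≥0∞) * (‖STFT h x ω‖₊ : ℝ≥0∞) := by
  have hk : Integrable fun t => (starRingEnd ℂ) (h t) * f t :=
    f.integrable.bdd_mul (c := M) (Complex.continuous_conj.measurable.comp hh).aestronglyMeasurable 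
      (.of_forall fun t => by simpa using hM t)
  have hg2 : Integrable fun t : EuclideanSpace ℝ ι => gaussWin t * gaussWin t :=
    (gw_integrable (ι := ι)).bdd_mul (c := 1) gw_cont.aestronglyMeasurable (.of_forall gw_le_one)
  have e1 : (∫ t, (starRingEnd ℂ) (h t) * f t) * (∫ t : EuclideanSpace ℝ ι, gaussWin t * gaussWin t) =
      ∫ x, ∫ t, (starRingEnd ℂ) (h t) * f t * (gaussWin (t - x) * gaussWin (t - x)) := by
    rw [← integral_integral_swap]
    · rw [← integral_mul_const]
      refine integral_congr_ae (.of_forall fun t => ?_)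
      dsimp only
      rw [integral_const_mul, integral_sub_left_eq_self (fun x => gaussWin x * gaussWin x) volume t]
    · have hc : Continuous fun q : EuclideanSpace ℝ ι × EuclideanSpace ℝ ι => 
          gaussWin (q.1 - q.2) * gaussWin (q.1 - q.2) := 
        (gw_cont.comp (by fun_prop)).mul (gw_cont.comp (by fun_prop))
      rw [integrable_prod_iff (by exact hk.1.comp_fst.mul hc.aestronglyMeasurable)]
      refine ⟨.of_forall fun t => ?_, ?_⟩
      · exact (hg2.comp_sub_left t).const_mul ((starRingEnd ℂ) (h t) * f t)
      · have : ∀ t, ∫ y, ‖Function.uncurry (fun t x => 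
            (starRingEnd ℂ) (h t) * f t * (gaussWin (t - x) * gaussWin (t - x))) (t, y)‖ =
            ‖(starRingEnd ℂ) (h t) * f t‖ * ∫ x : EuclideanSpace ℝ ι, ‖gaussWin x * gaussWin x‖ := by
          intro t
          rw [← integral_sub_left_eq_self (fun x => ‖gaussWin x * gaussWin x‖) volume t, 
            ← integral_const_mul]
          refine integral_congr_ae (.of_forall fun x => ?_)
          simp only [Function.uncurry, norm_mul]
        simp_rw [this]
        exact hk.norm.mul_const _
  rw [← enorm_mul, e1]
  simp_rw [← parseval_x f hh hM]
  refine (enorm_integral_le_lintegral_enorm _).trans ?_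
  refine (lintegral_mono fun x => enorm_integral_le_lintegral_enorm _).trans ?_
  rw [lintegral_lintegral_swap]
  · refine lintegral_mono fun ω => lintegral_mono fun x => ?_
    simp only [enorm_mul, RCLike.enorm_conj]
    rw [mul_comm]
    rfl
  · have m1 := (stft_meas hh).comp measurable_swap
    have m2 := (stft_meas f.continuous.measurable).comp measurable_swap
    exact ((Complex.continuous_conj.measurable.comp m1).mul m2).enorm.aemeasurable

theorem pairing_le {r s : ℝ≥0∞} (hr : 1 ≤ r) (hs : 1 ≤ s) 
    (f : 𝓢(EuclideanSpace ℝ ι, ℂ)) {h : EuclideanSpace ℝ ι → ℂ} (hh : Measurable h) {M : ℝ}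
    (hM : ∀ t, ‖h t‖ ≤ M) :
    ‖∫ t, (starRingEnd ℂ) (h t) * f t‖ₑ ≤ ‖∫ t : EuclideanSpace ℝ ι, gaussWin t * gaussWin t‖ₑ⁻¹ * 
      (modNorm (dualExp r) (dualExp s) f * modNorm r s h) := by
  rw [mul_comm, ← div_eq_mul_inv, ENNReal.le_div_iff_mul_le (by left; simpa using gw_sq_ne) (by left; simp)]
  refine (parseval_le f hh hM).trans ?_
  exact mix_holder hr hs (stft_enorm_meas f.continuous.measurable) (stft_enorm_meas hh)

end PartC3

section PartC4

variable {d : ℕ}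

/-- Weyl kernel. -/
noncomputable def wK (σ : EuclideanSpace ℝ (Fin d ⊕ Fin d) → ℂ) (x y : EuclideanSpace ℝ (Fin d)) : ℂ :=
  ∫ ω, cexp (Complex.I * (2 * Real.pi * (inner ℝ (x - y) ω : ℝ))) *
    σ (pairE ((2 : ℝ)⁻¹ • (x + y)) ω)

theorem weyl_eq (σ : EuclideanSpace ℝ (Fin d ⊕ Fin d) → ℂ) (f : EuclideanSpace ℝ (Fin d) → ℂ) 
    (x : EuclideanSpace ℝ (Fin d)) : weylOp σ f x = ∫ y, wK σ x y * f y := by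
  unfold weylOp wK
  simp_rw [integral_mul_const]

theorem pairE_cont : Continuous fun q : EuclideanSpace ℝ (Fin d) × EuclideanSpace ℝ (Fin d) => 
    pairE q.1 q.2 := by
  unfold pairE
  refine (PiLp.continuous_toLp 2 _).comp (continuous_pi fun i => ?_)
  rcases i with i | i <;> simp <;> fun_prop

theorem pairE_norm (x ω : EuclideanSpace ℝ (Fin d)) : ‖ω‖ ≤ ‖pairE x ω‖ := by
  rw [EuclideanSpace.norm_eq, EuclideanSpace.norm_eq]
  refine Real.sqrt_le_sqrt ?_
  rw [Fintype.sum_sum_type]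
  simp only [pairE, Sum.elim_inl, Sum.elim_inr]
  have : 0 ≤ ∑ j, ‖x j‖ ^ 2 := by positivity
  linarith

theorem sch_decay (σ : 𝓢(EuclideanSpace ℝ (Fin d ⊕ Fin d), ℂ)) : 
    ∃ B : ℝ, 0 ≤ B ∧ ∀ a ω : EuclideanSpace ℝ (Fin d), ‖σ (pairE a ω)‖ ≤ B * (1 + ‖ω‖) ^ (-((d + 1 : ℕ) : ℝ)) := by
  refine ⟨2 ^ (d + 1) * ((Finset.Iic (d + 1, 0)).sup fun m => SchwartzMap.seminorm ℝ m.1 m.2) σ, 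
    by positivity, fun a ω => ?_⟩
  have := SchwartzMap.one_add_le_sup_seminorm_apply (𝕜 := ℝ) (m := (d + 1, 0)) (k := d + 1) (n := 0) le_rfl le_rfl σ
    (pairE a ω)
  rw [norm_iteratedFDeriv_zero] at this
  have h1 : (0:ℝ) < (1 + ‖ω‖) ^ (d + 1) := by positivity
  rw [Real.rpow_neg (by positivity), Real.rpow_natCast, ← div_eq_mul_inv, le_div_iff₀ h1, mul_comm]
  refine le_trans ?_ this
  gcongr
  exact pairE_norm a ω

theorem wK_bdd (σ : 𝓢(EuclideanSpace ℝ (Fin d ⊕ Fin d), ℂ)) : 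
    ∃ B : ℝ, 0 ≤ B ∧ ∀ x y, ‖wK σ x y‖ ≤ B := by
  obtain ⟨B, hB, h⟩ := sch_decay σ
  have hi : Integrable fun ω : EuclideanSpace ℝ (Fin d) => B * (1 + ‖ω‖) ^ (-((d + 1 : ℕ) : ℝ)) :=
    (integrable_one_add_norm (by simp)).const_mul B
  refine ⟨∫ ω : EuclideanSpace ℝ (Fin d), B * (1 + ‖ω‖) ^ (-((d + 1 : ℕ) : ℝ)), 
    integral_nonneg fun ω => by positivity, fun x y => ?_⟩
  refine norm_integral_le_of_norm_le hi (.of_forall fun ω => ?_)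
  rw [norm_mul, phase_norm, one_mul]
  exact h _ _

theorem wK_meas (σ : 𝓢(EuclideanSpace ℝ (Fin d ⊕ Fin d), ℂ)) : 
    Measurable fun q : EuclideanSpace ℝ (Fin d) × EuclideanSpace ℝ (Fin d) => wK σ q.1 q.2 := by
  have hc : Continuous fun q : (EuclideanSpace ℝ (Fin d) × EuclideanSpace ℝ (Fin d)) × EuclideanSpace ℝ (Fin d) => 
      cexp (Complex.I * (2 * Real.pi * (inner ℝ (q.1.1 - q.1.2) q.2 : ℝ))) *
      σ (pairE ((2 : ℝ)⁻¹ • (q.1.1 + q.1.2)) q.2) := by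
    refine Continuous.mul (by fun_prop) (σ.continuous.comp ?_)
    have h2 : Continuous fun q : (EuclideanSpace ℝ (Fin d) × EuclideanSpace ℝ (Fin d)) × EuclideanSpace ℝ (Fin d) =>
        (((2 : ℝ)⁻¹ • (q.1.1 + q.1.2)), q.2) := by fun_prop
    exact pairE_cont.comp h2
  exact (hc.measurable.stronglyMeasurable.integral_prod_right' (ν := volume)).measurable

theorem wK_conj {σ τ : EuclideanSpace ℝ (Fin d ⊕ Fin d) → ℂ} (h : ∀ z, τ z = (starRingEnd ℂ) (σ z)) 
    (x y : EuclideanSpace ℝ (Fin d)) : (starRingEnd ℂ) (wK τ x y) = wK σ y x := by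
  unfold wK
  rw [← integral_conj]
  refine integral_congr_ae (.of_forall fun ω => ?_)
  simp only [map_mul, phase_conj, h, Complex.conj_conj, add_comm x y]
  congr 3
  rw [← neg_sub y x, inner_neg_left]
  push_cast; ring

theorem weyl_meas (σ : 𝓢(EuclideanSpace ℝ (Fin d ⊕ Fin d), ℂ)) (f : 𝓢(EuclideanSpace ℝ (Fin d), ℂ)) :
    Measurable (weylOp σ f) := by
  have e : weylOp σ f = fun x => ∫ y, wK σ x y * f y := funext fun x => weyl_eq _ _ _
  rw [e]
  have := (wK_meas σ).mul (f.continuous.measurable.comp measurable_snd)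
  exact (this.stronglyMeasurable.integral_prod_right' (ν := volume)).measurable

theorem weyl_bdd (σ : 𝓢(EuclideanSpace ℝ (Fin d ⊕ Fin d), ℂ)) (f : 𝓢(EuclideanSpace ℝ (Fin d), ℂ)) :
    ∃ M : ℝ, ∀ x, ‖weylOp σ f x‖ ≤ M := by
  obtain ⟨B, hB, h⟩ := wK_bdd σ
  refine ⟨∫ y, B * ‖f y‖, fun x => ?_⟩
  rw [weyl_eq]
  refine norm_integral_le_of_norm_le (f.integrable.norm.const_mul B) (.of_forall fun y => ?_)
  rw [norm_mul]
  gcongr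
  exact h x y

theorem weyl_adj (σ τ : 𝓢(EuclideanSpace ℝ (Fin d ⊕ Fin d), ℂ)) (h : ∀ z, τ z = (starRingEnd ℂ) (σ z)) 
    (f g : 𝓢(EuclideanSpace ℝ (Fin d), ℂ)) :
    ∫ t, weylOp σ f t * (starRingEnd ℂ) (g t) = ∫ t, (starRingEnd ℂ) (weylOp τ g t) * f t := by
  obtain ⟨B, hB, hK⟩ := wK_bdd σ
  have e1 : ∀ t, weylOp σ f t * (starRingEnd ℂ) (g t) = ∫ y, wK σ t y * f y * (starRingEnd ℂ) (g t) := by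
    intro t
    rw [weyl_eq, integral_mul_const]
  have e2 : ∀ y, (starRingEnd ℂ) (weylOp τ g y) * f y = ∫ t, wK σ t y * f y * (starRingEnd ℂ) (g t) := by
    intro y
    rw [weyl_eq, ← integral_conj, ← integral_mul_const]
    refine integral_congr_ae (.of_forall fun t => ?_)
    simp only [map_mul, wK_conj h]
    ring
  simp_rw [e1, e2]
  refine integral_integral_swap ?_
  have hg : Integrable fun t => (starRingEnd ℂ) (g t) := 
    (Complex.conjCLE.toContinuousLinearMap.integrable_comp g.integrable)
  have hf : Integrable f := f.integrable
  have := (hg.mul_prod hf).bdd_mul (c := B) (wK_meas σ).aestronglyMeasurable 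
    (.of_forall fun q => hK _ _)
  refine this.congr (.of_forall fun q => ?_)
  simp only [Function.uncurry]; ring

theorem stft_conj {ι : Type} [Fintype ι] {σ τ : EuclideanSpace ℝ ι → ℂ} (h : ∀ z, τ z = (starRingEnd ℂ) (σ z))
    (x ω : EuclideanSpace ℝ ι) : STFT τ x ω = (starRingEnd ℂ) (STFT σ x (-ω)) := by
  unfold STFT
  rw [← integral_conj]
  refine integral_congr_ae (.of_forall fun t => ?_)
  have := phase_conj (inner ℝ ω t)
  simp only [map_mul, h, gw_conj, inner_neg_left]
  rw [← this]
  congr 4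
  push_cast; ring

theorem mod_conj {ι : Type} [Fintype ι] {σ τ : EuclideanSpace ℝ ι → ℂ} (h : ∀ z, τ z = (starRingEnd ℂ) (σ z))
    (p q : ℝ≥0∞) : modNorm p q τ = modNorm p q σ := by
  unfold modNorm
  rw [← lq_neg q (fun ω => lqNorm volume p fun x => (‖STFT σ x ω‖₊ : ℝ≥0∞))]
  congr 1
  ext ω
  congr 1
  ext x
  rw [stft_conj h, RCLike.nnnorm_conj]

theorem sch_conj {ι : Type} [Fintype ι] (σ : 𝓢(EuclideanSpace ℝ ι, ℂ)) : 
    ∃ τ : 𝓢(EuclideanSpace ℝ ι, ℂ), ∀ z, τ z = (starRingEnd ℂ) (σ z) :=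
  ⟨SchwartzMap.postcompCLM Complex.conjCLE.toContinuousLinearMap σ, fun z => rfl⟩

end PartC4


section fin
variable {ι : Type} [Fintype ι]

theorem stft_unif {H : EuclideanSpace ℝ ι → ℂ} {M : ℝ} (hM : ∀ t, ‖H t‖ ≤ M)
    (x ω : EuclideanSpace ℝ ι) :
    ‖STFT H x ω‖ ≤ ∫ t : EuclideanSpace ℝ ι, M * ‖gaussWin t‖ := by
  have e := integral_sub_right_eq_self (μ := volume)
    (fun t : EuclideanSpace ℝ ι => M * ‖gaussWin t‖) x
  rw [← e]
  unfold STFT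
  refine norm_integral_le_of_norm_le ?_ (.of_forall fun t => ?_)
  · exact ((gw_integrable.norm.const_mul M).comp_sub_right x)
  · rw [norm_mul, norm_mul, phase_norm_neg, mul_one, gw_conj]
    gcongr
    exact hM t

/-- the key linearization step. -/
theorem linz {H : EuclideanSpace ℝ ι → ℂ} (hH : Measurable H) {M : ℝ} (hM : ∀ t, ‖H t‖ ≤ M)
    {v : EuclideanSpace ℝ ι → EuclideanSpace ℝ ι → ℝ≥0∞} (hv : Measurable (Function.uncurry v))
    (n : ℕ) (hn : ∀ ω x, v ω x ≤ n) (hsup : ∀ ω x, v ω x ≠ 0 → ‖ω‖ ≤ n ∧ ‖x‖ ≤ n) :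
    ∃ (Ψ : EuclideanSpace ℝ ι × EuclideanSpace ℝ ι → ℂ) (g : 𝓢(EuclideanSpace ℝ ι, ℂ)),
      Integrable Ψ ∧ (∀ z, ‖Ψ z‖ₑ ≤ v z.1 z.2) ∧
      (∀ t, g t = ∫ z, Ψ z * (gaussWin (t - z.2) *
        cexp (Complex.I * (2 * Real.pi * (inner ℝ z.1 t : ℝ))))) ∧
      ∫⁻ ω, ∫⁻ x, (‖STFT H x ω‖₊ : ℝ≥0∞) * v ω x = ‖∫ t, H t * (starRingEnd ℂ) (g t)‖ₑ := by
  have hfin : ∀ ω x, v ω x ≠ ∞ := fun ω x => ((hn ω x).trans_lt (by simp)).ne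
  have hvr : ∀ ω x, (v ω x).toReal ≤ n := fun ω x => by
    have := ENNReal.toReal_mono (by simp) (hn ω x)
    simpa using this
  let S : EuclideanSpace ℝ ι × EuclideanSpace ℝ ι → ℂ := fun z => STFT H z.2 z.1
  have hS : Measurable S := stft_meas hH
  have hvm : Measurable fun z : EuclideanSpace ℝ ι × EuclideanSpace ℝ ι => v z.1 z.2 := hv
  let Ψ : EuclideanSpace ℝ ι × EuclideanSpace ℝ ι → ℂ :=
    fun z => (S z / (‖S z‖ : ℂ)) * ((v z.1 z.2).toReal : ℂ)
  have hΨm : Measurable Ψ := 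
    (hS.div (Complex.measurable_ofReal.comp hS.norm)).mul 
      (Complex.measurable_ofReal.comp hvm.ennreal_toReal)
  have hΨ1 : ∀ z, ‖Ψ z‖ ≤ (v z.1 z.2).toReal := fun z => by
    simp only [Ψ, norm_mul, norm_div, Complex.norm_real, Real.norm_eq_abs, abs_norm,
      abs_of_nonneg ENNReal.toReal_nonneg]
    exact mul_le_of_le_one_left ENNReal.toReal_nonneg (div_self_le_one _)
  have hb : ∀ z, ‖Ψ z‖ ≤ (n : ℝ) := fun z => (hΨ1 z).trans (hvr _ _)
  have hs : ∀ z, Ψ z ≠ 0 → ‖z.1‖ ≤ (n : ℝ) ∧ ‖z.2‖ ≤ (n : ℝ) := fun z hz => by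
    refine hsup z.1 z.2 fun h0 => hz ?_
    simp [Ψ, h0]
  have hΨi := psi_int Ψ hΨm hb hs
  obtain ⟨g, hg⟩ := synth Ψ hΨm hb hs
  refine ⟨Ψ, g, hΨi, fun z => ?_, hg, ?_⟩
  · rw [← ofReal_norm]
    exact ENNReal.ofReal_le_of_le_toReal (hΨ1 z)
  · rw [pair_synth hH hM Ψ hΨi g hg]
    have e : ∀ z, (starRingEnd ℂ) (Ψ z) * STFT H z.2 z.1 = 
        ((‖S z‖ * (v z.1 z.2).toReal : ℝ) : ℂ) := fun z => by
      change (starRingEnd ℂ) (Ψ z) * S z = _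
      simp only [Ψ, map_mul, map_div₀, Complex.conj_ofReal]
      by_cases h0 : S z = 0
      · simp [h0]
      · have h1 : (‖S z‖ : ℂ) ≠ 0 := by simpa using h0
        have h2 : (starRingEnd ℂ) (S z) * S z = (‖S z‖ : ℂ) ^ 2 := Complex.conj_mul' _
        push_cast
        field_simp
        rw [mul_right_comm, h2]
    have hi : Integrable fun z => (starRingEnd ℂ) (Ψ z) * STFT H z.2 z.1 := by
      have h1 : Integrable fun z => (starRingEnd ℂ) (Ψ z) :=
        Complex.conjCLE.toContinuousLinearMap.integrable_comp hΨi
      exact h1.mul_bdd (c := ∫ t : EuclideanSpace ℝ ι, M * ‖gaussWin t‖) hS.aestronglyMeasurable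
        (.of_forall fun z => stft_unif hM _ _)
    simp_rw [e] at hi ⊢
    have hi2 : Integrable fun z : EuclideanSpace ℝ ι × EuclideanSpace ℝ ι => 
        ‖S z‖ * (v z.1 z.2).toReal := by
      have := hi.re
      refine this.congr (.of_forall fun z => ?_)
      simp only [RCLike.re_to_complex, Complex.ofReal_re]
    rw [integral_complex_ofReal, ← ofReal_norm, Complex.norm_real, Real.norm_of_nonneg 
      (integral_nonneg fun z => by positivity),
      ofReal_integral_eq_lintegral_ofReal hi2 (.of_forall fun z => by positivity)]
    rw [Measure.volume_eq_prod, lintegral_prod _ (by fun_prop)]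
    refine lintegral_congr fun ω => lintegral_congr fun x => ?_
    rw [ENNReal.ofReal_mul (norm_nonneg _), ENNReal.ofReal_toReal (hfin _ _), ofReal_norm]
    rfl

theorem synth_norm {r s : ℝ≥0∞} (hr : 1 ≤ r) (hs : 1 ≤ s) {K : ℝ} (hK : ∀ x y θ : EuclideanSpace ℝ ι,
    ‖∫ t : EuclideanSpace ℝ ι, gaussWin (t - x) * gaussWin (t - y) *
      cexp (Complex.I * (2 * Real.pi * (inner ℝ θ t : ℝ)))‖ ≤
    K * (Real.exp (-(Real.pi / 2 * ‖θ‖ ^ 2)) * Real.exp (-(Real.pi / 2 * ‖x - y‖ ^ 2))))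
    {v : EuclideanSpace ℝ ι → EuclideanSpace ℝ ι → ℝ≥0∞} (hv : Measurable (Function.uncurry v))
    (Ψ : EuclideanSpace ℝ ι × EuclideanSpace ℝ ι → ℂ) (hΨ : Integrable Ψ)
    (hΨv : ∀ z, ‖Ψ z‖ₑ ≤ v z.1 z.2)
    (g : EuclideanSpace ℝ ι → ℂ) (hg : ∀ t, g t = ∫ z, Ψ z * (gaussWin (t - z.2) * 
      cexp (Complex.I * (2 * Real.pi * (inner ℝ z.1 t : ℝ))))) :
    modNorm r s g ≤ 
      (∫⁻ w, (Gam K : EuclideanSpace ℝ ι × EuclideanSpace ℝ ι → ℝ≥0∞) w) * mixN r s v := by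
  rw [modNorm_eq]
  refine le_trans (mix_mono fun η y => ?_) (young hr hs hv (Gam_meas K))
  refine (stft_bdd hK Ψ hΨ g hg y η).trans (lintegral_mono fun z => ?_)
  gcongr
  exact hΨv z

end fin

/-- duality for Weyl operators on modulation spaces. -/
theorem weyl_modulation_duality (d : ℕ) (p q r s : ℝ≥0∞)
    (hp : 1 ≤ p) (hq : 1 ≤ q) (hr : 1 ≤ r) (hs : 1 ≤ s)
    (h : ∃ C : ℝ, 0 < C ∧
      ∀ (σ : SchwartzMap (EuclideanSpace ℝ (Fin d ⊕ Fin d)) ℂ)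
        (f : SchwartzMap (EuclideanSpace ℝ (Fin d)) ℂ),
        modNorm r s (weylOp ⇑σ ⇑f) ≤
          ENNReal.ofReal C * modNorm p q ⇑σ * modNorm r s ⇑f) :
    ∃ C' : ℝ, 0 < C' ∧
      ∀ (σ : SchwartzMap (EuclideanSpace ℝ (Fin d ⊕ Fin d)) ℂ)
        (f : SchwartzMap (EuclideanSpace ℝ (Fin d)) ℂ),
        modNorm (dualExp r) (dualExp s) (weylOp ⇑σ ⇑f) ≤
          ENNReal.ofReal C' * modNorm p q ⇑σ *
            modNorm (dualExp r) (dualExp s) ⇑f := by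
  obtain ⟨C, hC, h⟩ := h
  obtain ⟨K, hK0, hK⟩ := amb (ι := Fin d)
  let E := EuclideanSpace ℝ (Fin d)
  set c : ℝ≥0∞ := ‖∫ t : E, gaussWin t * gaussWin t‖ₑ⁻¹ with hc
  set G : ℝ≥0∞ := ∫⁻ w : E × E, Gam K w with hG
  have hcf : c ≠ ∞ := by
    rw [hc]
    simpa using gw_sq_ne (ι := Fin d)
  have hGf : G ≠ ∞ := Gam_fin K
  have hAf : c * ENNReal.ofReal C * G ≠ ∞ := 
    ENNReal.mul_ne_top (ENNReal.mul_ne_top hcf ENNReal.ofReal_ne_top) hGf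
  refine ⟨(c * ENNReal.ofReal C * G).toReal + 1, by positivity, fun σ f => ?_⟩
  have hA : c * ENNReal.ofReal C * G ≤ ENNReal.ofReal ((c * ENNReal.ofReal C * G).toReal + 1) := by
    rw [ENNReal.le_ofReal_iff_toReal_le hAf (by positivity)]
    linarith
  refine le_trans ?_ (mul_le_mul_left (mul_le_mul_left hA _) _)
  obtain ⟨τ, hτ⟩ := sch_conj σ
  obtain ⟨M, hM⟩ := weyl_bdd σ f
  rw [modNorm_eq]
  refine mix_converse hr hs (stft_enorm_meas (weyl_meas σ f)) _ fun v hv n hn hsup => ?_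
  obtain ⟨Ψ, g, hΨi, hΨv, hg, he⟩ := linz (weyl_meas σ f) hM hv n hn hsup
  rw [he, weyl_adj σ τ hτ f g]
  obtain ⟨M', hM'⟩ := weyl_bdd τ g
  refine (pairing_le hr hs f (weyl_meas τ g) hM').trans ?_
  calc c * (modNorm (dualExp r) (dualExp s) f * modNorm r s (weylOp τ g)) 
      ≤ c * (modNorm (dualExp r) (dualExp s) f * 
        (ENNReal.ofReal C * modNorm p q σ * (G * mixN r s v))) := by
        refine mul_le_mul_right (mul_le_mul_right ((h τ g).trans ?_) _) _
        rw [mod_conj hτ p q]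
        exact mul_le_mul_right (synth_norm hr hs hK hv Ψ hΨi hΨv g hg) _
    _ = _ := by ring
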